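/- arXiv:2303.09509 — 5 statements merged into one kernel-verified Lean document; each statement's English description precedes it below -/
import Mathlib

section
/- Let G be a finite group acting on a set Ω, and let N be a normal subgroup of G such that the quotient G/N is cyclic. Then H(G,Ω) ≤ H(N,Ω) + ω(|G/N|). -/
/-!
Choose `Δ ⊆ Γ` minimal with `N_(Δ) = N_(Γ)` (pointwise stabilizers); minimality makes `Δ`
independent for `N`. It remains to inject `Γ \ Δ` into the set of primes dividing `|G/N|`.

For `γ ∈ Γ \ Δ`, let `A γ` be the image of `G_(Γ \ {γ})` in `G/N`, and `B` the image of `G_(Γ)`.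
As `Δ ⊆ Γ \ {γ}`, we have `G_(Γ \ {γ}) ∩ N ≤ N_(Δ) ≤ G_(Γ)`. Hence nothing is lost in passing to
`G/N`: the inclusion `B < A γ` remains strict, and `A γ ∩ A γ' = B` for `γ ≠ γ'`. Pick a prime
`p γ` dividing `|A γ : B|`. If `p γ = p γ'` with `γ ≠ γ'`, then `d = p γ * |B|` divides both `|A γ|`
and `|A γ'|`. A cyclic group has at most `d` solutions of `x ^ d = 1`
(`mem_of_pow_eq_one_of_dvd_card`), so an element of order `d` in `A γ` also lies in `A γ'`,
hence in `B`, and `d` divides `|B|`, which is absurd.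
-/

/-- A finset `S` of points is *independent* for an action of `G` on `Ω` if for every proper
subset `S'` of `S` the pointwise stabilizer of `S'` strictly contains that of `S`. -/
def IsIndependentSet (G : Type*) {Ω : Type*} [Group G] [MulAction G Ω] (S : Finset Ω) : Prop :=
  ∀ T ⊂ S, fixingSubgroup G (S : Set Ω) < fixingSubgroup G (T : Set Ω)

/-- A subgroup of a finite cyclic group whose order is divisible by `d` contains all solutions of
`x ^ d = 1`, because it already contains `d` of them. -/
lemma mem_of_pow_eq_one_of_dvd_card {C : Type*} [Group C] [Finite C] [IsCyclic C]
    (A : Subgroup C) {d : ℕ} (hd : d ∣ Nat.card A) {x : C} (hx : x ^ d = 1) : x ∈ A := by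
  classical
  have := Fintype.ofFinite C
  have hd0 : 0 < d := Nat.pos_of_dvd_of_pos hd Nat.card_pos
  obtain ⟨g, hg⟩ := IsCyclic.exists_ofOrder_eq_natCard (α := A)
  have hh : orderOf ((g ^ (Nat.card A / d) : A) : C) = d := by
    rw [Subgroup.orderOf_coe, orderOf_pow_of_dvd, hg, Nat.div_div_self hd Nat.card_pos.ne']
    · exact (Nat.div_pos (Nat.le_of_dvd Nat.card_pos hd) hd0).ne'
    · rw [hg]; exact Nat.div_dvd_of_dvd hd
  set h : C := ((g ^ (Nat.card A / d) : A) : C) with hdef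
  have hhA : h ∈ A := SetLike.coe_mem _
  have hsub : (Finset.univ.filter fun y : C => y ∈ Subgroup.zpowers h) ⊆
      Finset.univ.filter fun y : C => y ^ d = 1 := by
    intro y hy
    simp only [Finset.mem_filter, Finset.mem_univ, true_and] at hy ⊢
    rw [← orderOf_dvd_iff_pow_eq_one, ← hh]
    exact orderOf_dvd_of_mem_zpowers hy
  have hcard : (Finset.univ.filter fun y : C => y ∈ Subgroup.zpowers h).card = d := by
    rw [← Fintype.card_subtype, ← Nat.card_eq_fintype_card]
    exact (Nat.card_zpowers h).trans hh
  have heq := Finset.eq_of_subset_of_card_le hsub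
    ((IsCyclic.card_pow_eq_one_le hd0).trans hcard.ge)
  have hxm : x ∈ Finset.univ.filter fun y : C => y ^ d = 1 := by simpa using hx
  rw [← heq] at hxm
  exact (Subgroup.zpowers_le.2 hhA) (by simpa using hxm)

/-- In a finite cyclic group `|A ∩ A'|` is divisible by every common divisor of `|A|` and `|A'|`. -/
lemma dvd_card_of_inf_le {C : Type*} [Group C] [Finite C] [IsCyclic C]
    {A A' B : Subgroup C} {d : ℕ} (hd : d ∣ Nat.card A) (hd' : d ∣ Nat.card A')
    (hB : A ⊓ A' ≤ B) : d ∣ Nat.card B := by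
  have hd0 : 0 < d := Nat.pos_of_dvd_of_pos hd Nat.card_pos
  obtain ⟨g, hg⟩ := IsCyclic.exists_ofOrder_eq_natCard (α := A)
  have hh : orderOf ((g ^ (Nat.card A / d) : A) : C) = d := by
    rw [Subgroup.orderOf_coe, orderOf_pow_of_dvd, hg, Nat.div_div_self hd Nat.card_pos.ne']
    · exact (Nat.div_pos (Nat.le_of_dvd Nat.card_pos hd) hd0).ne'
    · rw [hg]; exact Nat.div_dvd_of_dvd hd
  have hmem : ((g ^ (Nat.card A / d) : A) : C) ∈ B :=
    hB ⟨SetLike.coe_mem _, mem_of_pow_eq_one_of_dvd_card A' hd'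
      (by rw [← orderOf_dvd_iff_pow_eq_one, hh])⟩
  have := Subgroup.orderOf_dvd_natCard B hmem
  rwa [hh] at this

/-- **Lemma 3.1.** Let `G` be a finite group acting on a set `Ω` and let `N` be a normal
subgroup of `G` with `G/N` cyclic. Then `H(G,Ω) ≤ H(N,Ω) + ω(|G/N|)`: every independent
set for `G` has size at most `ω(|G/N|)` more than the size of some independent set
for `N`. -/
theorem height_le_of_quotient_cyclic
    {G Ω : Type*} [Group G] [Finite G] [MulAction G Ω]
    (N : Subgroup G) (hN : N.Normal) (hcyc : IsCyclic (G ⧸ N))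
    (Γ : Finset Ω) (hΓ : IsIndependentSet G Γ) :
    ∃ Δ : Finset Ω, IsIndependentSet ↥N Δ ∧
      Γ.card ≤ Δ.card + (Nat.card (G ⧸ N)).primeFactors.card := by
  classical
  obtain ⟨Δ, hΔ, hmin⟩ := (Γ.powerset.filter fun S : Finset Ω =>
      fixingSubgroup N (S : Set Ω) = fixingSubgroup N (Γ : Set Ω)).exists_min_image
    Finset.card ⟨Γ, by simp⟩
  simp only [Finset.mem_filter, Finset.mem_powerset] at hΔ hmin
  obtain ⟨hΔΓ, hΔfix⟩ := hΔ
  refine ⟨Δ, ?_, ?_⟩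
  · intro T hT
    refine lt_of_le_of_ne (fixingSubgroup_antitone _ _ (Finset.coe_subset.2 hT.1)) fun h => ?_
    have := hmin T ⟨hT.1.trans hΔΓ, h.symm.trans hΔfix⟩
    exact absurd (Finset.card_lt_card hT) (by omega)
  -- An element of `N` fixing `Δ` pointwise fixes `Γ` pointwise.
  have key : ∀ n ∈ N, n ∈ fixingSubgroup G (Δ : Set Ω) → n ∈ fixingSubgroup G (Γ : Set Ω) := by
    intro n hn h
    have h1 : (⟨n, hn⟩ : N) ∈ fixingSubgroup N (Δ : Set Ω) := by
      rw [mem_fixingSubgroup_iff] at h ⊢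
      exact h
    rw [hΔfix, mem_fixingSubgroup_iff] at h1
    rw [mem_fixingSubgroup_iff]
    exact h1
  set B : Subgroup (G ⧸ N) := (fixingSubgroup G (Γ : Set Ω)).map (QuotientGroup.mk' N) with hB
  let A : Ω → Subgroup (G ⧸ N) := fun γ =>
    (fixingSubgroup G ((Γ.erase γ : Finset Ω) : Set Ω)).map (QuotientGroup.mk' N)
  have hle : ∀ γ, fixingSubgroup G (Γ : Set Ω) ≤
      fixingSubgroup G ((Γ.erase γ : Finset Ω) : Set Ω) := fun γ =>
    fixingSubgroup_antitone _ _ (Finset.coe_subset.2 (Finset.erase_subset _ _))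
  have hBA : ∀ γ, B ≤ A γ := fun γ => Subgroup.map_mono (hle γ)
  have hΔe : ∀ γ ∈ Γ \ Δ, fixingSubgroup G ((Γ.erase γ : Finset Ω) : Set Ω) ≤
      fixingSubgroup G (Δ : Set Ω) := by
    intro γ hγ
    refine fixingSubgroup_antitone _ _ (Finset.coe_subset.2 ?_)
    exact Finset.subset_erase.2 ⟨hΔΓ, (Finset.mem_sdiff.1 hγ).2⟩
  have hne : ∀ γ ∈ Γ \ Δ, ¬ A γ ≤ B := by
    intro γ hγ hAB
    refine (hΓ _ (Finset.erase_ssubset (Finset.mem_sdiff.1 hγ).1)).not_ge fun a ha => ?_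
    obtain ⟨b, hb, hab⟩ := hAB (Subgroup.mem_map_of_mem _ ha)
    have hn : b⁻¹ * a ∈ N := QuotientGroup.eq.1 hab
    have := key _ hn (hΔe γ hγ (mul_mem (inv_mem (hle γ hb)) ha))
    simpa using mul_mem hb this
  have hinf : ∀ γ ∈ Γ \ Δ, ∀ γ' ∈ Γ \ Δ, γ ≠ γ' → A γ ⊓ A γ' ≤ B := by
    rintro γ hγ γ' hγ' hneq x ⟨⟨a, ha, rfl⟩, ⟨a', ha', haa⟩⟩
    have hn : a'⁻¹ * a ∈ N := QuotientGroup.eq.1 haa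
    have hk := key _ hn (mul_mem (inv_mem (hΔe γ' hγ' ha')) (hΔe γ hγ ha))
    have ha2 : a ∈ fixingSubgroup G ((Γ.erase γ' : Finset Ω) : Set Ω) := by
      simpa using mul_mem ha' (hle γ' hk)
    refine Subgroup.mem_map_of_mem _ ?_
    have ha1 : a ∈ fixingSubgroup G ((Γ.erase γ : Finset Ω) : Set Ω) := ha
    rw [mem_fixingSubgroup_iff] at ha1 ha2 ⊢
    intro y hy
    by_cases hyγ : y = γ
    · exact ha2 y (Finset.mem_coe.2 (Finset.mem_erase.2 ⟨hyγ ▸ hneq, hy⟩))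
    · exact ha1 y (Finset.mem_coe.2 (Finset.mem_erase.2 ⟨hyγ, hy⟩))
  have hp : ∀ γ ∈ Γ \ Δ, ∃ p : ℕ, p.Prime ∧ p * Nat.card B ∣ Nat.card (A γ) := by
    intro γ hγ
    have hr : B.relIndex (A γ) ≠ 1 := fun h => hne γ hγ (Subgroup.relIndex_eq_one.1 h)
    obtain ⟨p, hpp, hpd⟩ := Nat.exists_prime_and_dvd hr
    refine ⟨p, hpp, ?_⟩
    have hmul := Subgroup.relIndex_mul_relIndex ⊥ B (A γ) bot_le (hBA γ)
    rw [Subgroup.relIndex_bot_left, Subgroup.relIndex_bot_left] at hmul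
    rw [← hmul, mul_comm]
    exact mul_dvd_mul_left _ hpd
  choose! p hpp hpd using hp
  have hcard : (Γ \ Δ).card ≤ (Nat.card (G ⧸ N)).primeFactors.card := by
    refine Finset.card_le_card_of_injOn p ?_ ?_
    · intro γ hγ
      refine Finset.mem_coe.2 (Nat.mem_primeFactors.2 ⟨hpp γ hγ, ?_, Nat.card_pos.ne'⟩)
      exact ((dvd_mul_right _ _).trans (hpd γ hγ)).trans (Subgroup.card_subgroup_dvd_card _)
    · intro γ hγ γ' hγ' hpe
      by_contra hneq
      have hd := dvd_card_of_inf_le (hpd γ hγ) (hpe ▸ hpd γ' hγ') (hinf γ hγ γ' hγ' hneq)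
      have h1 := Nat.le_of_dvd Nat.card_pos hd
      have h2 : 0 < Nat.card B := Nat.card_pos
      nlinarith [(hpp γ hγ).two_le]
  rw [Finset.card_sdiff_of_subset hΔΓ] at hcard
  omega
end

section
/- Let H be a subgroup of the symmetric group S₄ and let n be a positive integer. Then the direct product G = H × C_n has at most 9 + ω(n) maximal subgroups. -/
/-!
Write `G = H × C_n`, let `c` be a generator of the central factor `C_n`, and let `M` be a maximal
subgroup of `G`. If `c ∈ M`, then `M = M₀ × C_n` with `M₀` maximal in `H`. If `c ∉ M`, then
`G = M⟨c⟩`, so `M` is normal with cyclic simple quotient generated by the image of `c`; thus `M` is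
the kernel of some `ψ : G → C_p` with `p ∣ n` and `ψ c` the standard generator, and `M` is determined
by `p` and the restriction of `ψ` to `H` (`exists_hom_of_isCoatom`). Hence
(`card_coatom_prod_le`) the number of maximal subgroups of `G` is at most
`m(H) + ∑ |Hom(H, C_p)|`, where `m(H)` is the number of maximal subgroups of `H` and the sum runs
over the primes `p ∣ n`.

The trivial homomorphisms account for `ω(n)`. Nontrivial ones exist only for `p ∈ {2, 3}`, as `|H|`
divides `24`. The kernel of such a homomorphism is a maximal subgroup containing all `p`-th powers,
and it comes from at most `p - 1` homomorphisms (`ncard_hom_le`). It remains to see that the number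
of maximal subgroups of `H`, plus the number of those containing all squares, plus twice the number
of those containing all cubes, is at most `9` (`coatom_count`). This is a finite check over the
thirty subgroups of `S₄`, encoded as bit masks. The list of masks is shown to be complete by checking
that the subgroup generated by a listed subgroup and a new element always contains a strictly larger
listed one (`masks_grow`, `exists_mask`).
-/

/-! ### The subgroups of `S₄` as bit masks -/

/-- A numbering of the elements of `S₄` by the natural numbers below `24`: every permutation of
`{0, 1, 2, 3}` is uniquely of the form `(0 a)(1 b)(2 c)` with `a ≥ 0`, `b ≥ 1`, `c ≥ 2`, and
`a`, `b - 1`, `c - 2` are read off as mixed radix digits. The number `0` is the identity. -/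
def elt (i : ℕ) : Equiv.Perm (Fin 4) :=
  Equiv.swap 0 (Fin.ofNat 4 i) * Equiv.swap 1 (Fin.ofNat 4 (1 + (i / 4) % 3)) *
    Equiv.swap 2 (Fin.ofNat 4 (2 + i / 12))

/-- The multiplication table of `S₄` for the numbering `elt`, packed into a single natural number
whose base `32` digit at position `24 * i + j` is the number of `elt i * elt j`. -/
def mulTable : ℕ :=
  294214373368035540198470883994928956586414402627052033306976359270226660199885675667624508991796969237224349668776845981525035696606181893133703731863398212935528053898475366029156666655729966138783346675556044900045821535615598283665013909144737127283535587570191169714416302001403443033402974849815449587910535550602098069280426046880736912849621961848273144346458012580802098034437259592827403034838996690788245190507389426681724145517078622975855405730730586081927833134637491369522644263061160203577201112282774242262597474773873141336799138404898284836004097020267467421162196236980611673072762285174700514347201962817458638362133400373963844872247462739586076088840522500586913984865616508877413969466037498428098522486916450983612573807643034726004434637299524888769742094666939876800586171938528756269586553663026953634559470323588519900582961512641898580000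

/-- The product of `S₄` transported to numbers below `24`. -/
def pmul (i j : ℕ) : ℕ := (mulTable >>> (5 * (24 * i + j))) % 32

lemma elt_pmul : ∀ i < 24, ∀ j < 24, pmul i j < 24 ∧ elt (pmul i j) = elt i * elt j := by
  decide +kernel

lemma elt_surj : ∀ σ : Equiv.Perm (Fin 4), ∃ i < 24, elt i = σ := by
  decide +kernel

lemma elt_inj : ∀ i < 24, ∀ j < 24, elt i = elt j → i = j := by
  decide +kernel

/-- The thirty subgroups of `S₄`, each encoded as a bit mask: bit `i` says whether `elt i` is a
member. -/
def masks : List ℕ :=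
  [1, 3, 5, 9, 17, 97, 119, 129, 153, 257, 1025, 1285, 2561, 2827, 4097, 8193, 9345, 12291, 49153,
    53261, 1114113, 1118481, 1175265, 2359425, 2368665, 4726785, 4732035, 8520705, 8529285, 16777215]

/-- The mask of `S ∪ S * S`, where `S` is the set with the given mask. -/
def step (S : ℕ) : ℕ :=
  let l := (List.range 24).filter S.testBit
  l.foldl (fun r i => l.foldl (fun r j => r ||| 1 <<< pmul i j) r) S

/-- If a listed mask `A` does not contain `x`, some strictly larger listed mask encodes a set of
products of elements of `A ∪ {x}`. -/
lemma masks_grow : ∀ A ∈ masks, ∀ x < 24, A.testBit x = false →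
    ∃ B ∈ masks, A < B ∧ B &&& step (step (A ||| 1 <<< x)) = B := by
  decide +kernel

lemma masks_closed : ∀ A ∈ masks, A.testBit 0 = true ∧ ∀ i < 24, A.testBit i = true →
    (∃ j < 24, A.testBit j = true ∧ pmul i j = 0) ∧
    ∀ j < 24, A.testBit j = true → A.testBit (pmul i j) = true := by
  decide +kernel

lemma masks_lt : ∀ A ∈ masks, A < 2 ^ 24 := by decide +kernel

/-- For listed masks, `m` encodes a maximal subgroup of the subgroup encoded by `h`. -/
def isMax (h m : ℕ) : Bool :=
  m != h && m &&& h == m &&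
    masks.all fun k => !(m &&& k == m && k &&& h == k) || k == m || k == h

/-- `m` contains all squares of elements of `h`. -/
def hasSq (h m : ℕ) : Bool :=
  (List.range 24).all fun i => !h.testBit i || m.testBit (pmul i i)

/-- `m` contains all cubes of elements of `h`. -/
def hasCube (h m : ℕ) : Bool :=
  (List.range 24).all fun i => !h.testBit i || m.testBit (pmul i (pmul i i))

/-- The numerical heart of the bound; equality holds for `S₄` itself. -/
lemma masks_count : ∀ h ∈ masks,
    (masks.filter (isMax h)).length + (masks.filter fun m => isMax h m && hasSq h m).length +
      2 * (masks.filter fun m => isMax h m && hasCube h m).length ≤ 9 := by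
  decide +kernel

/-! ### From masks to subgroups -/

/-- The mask `m` encodes the set of elements of the subgroup `K`. -/
def Encodes (m : ℕ) (K : Subgroup (Equiv.Perm (Fin 4))) : Prop :=
  ∀ i, m.testBit i = true ↔ i < 24 ∧ elt i ∈ K

/-- All members of the set with mask `m` lie in the subgroup `K`. -/
def Inside (m : ℕ) (K : Subgroup (Equiv.Perm (Fin 4))) : Prop :=
  ∀ i, m.testBit i = true → i < 24 ∧ elt i ∈ K

lemma Inside.or_bit {m x : ℕ} {K : Subgroup (Equiv.Perm (Fin 4))} (hm : Inside m K) (hx : x < 24)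
    (hxK : elt x ∈ K) : Inside (m ||| 1 <<< x) K := by
  intro i hi
  rw [Nat.testBit_or, Bool.or_eq_true] at hi
  rcases hi with hi | hi
  · exact hm i hi
  · rw [Nat.one_shiftLeft, Nat.testBit_two_pow, decide_eq_true_eq] at hi
    subst hi
    exact ⟨hx, hxK⟩

lemma Inside.step {m : ℕ} {K : Subgroup (Equiv.Perm (Fin 4))} (hm : Inside m K) :
    Inside (step m) K := by
  unfold _root_.step
  refine List.foldlRecOn (motive := fun r => Inside r K) _ _ hm fun r hr i hi => ?_
  refine List.foldlRecOn (motive := fun r => Inside r K) _ _ hr fun r hr j hj => ?_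
  obtain ⟨hi24, hi⟩ := hm i (List.mem_filter.1 hi).2
  obtain ⟨hj24, hj⟩ := hm j (List.mem_filter.1 hj).2
  obtain ⟨h24, he⟩ := elt_pmul i hi24 j hj24
  exact hr.or_bit h24 (he ▸ K.mul_mem hi hj)

lemma elt_zero : elt 0 = 1 := by decide

/-- Every subgroup of `S₄` is listed: a maximal listed mask inside `K` is all of `K`, since
otherwise `masks_grow` would enlarge it within `K`. -/
lemma exists_mask (K : Subgroup (Equiv.Perm (Fin 4))) : ∃ m ∈ masks, Encodes m K := by
  classical
  have hne : (masks.toFinset.filter fun m => Inside m K).Nonempty := by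
    refine ⟨1, Finset.mem_filter.2 ⟨by decide, fun i hi => ?_⟩⟩
    have h1 : (2 ^ 0).testBit i = true := hi
    rw [Nat.testBit_two_pow, decide_eq_true_eq] at h1
    subst h1
    exact ⟨by norm_num, elt_zero ▸ K.one_mem⟩
  obtain ⟨A, hA, hmax⟩ := Finset.exists_max_image _ id hne
  obtain ⟨hAm, hAK⟩ := Finset.mem_filter.1 hA
  have hAm := List.mem_toFinset.1 hAm
  refine ⟨A, hAm, fun i => ⟨hAK i, fun ⟨hi, hiK⟩ => ?_⟩⟩
  by_contra hb
  obtain ⟨B, hB, hlt, hBs⟩ := masks_grow A hAm i hi (by simpa using hb)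
  have hBK : Inside B K := by
    intro j hj
    refine (hAK.or_bit hi hiK).step.step j ?_
    rw [← hBs, Nat.testBit_and, Bool.and_eq_true] at hj
    exact hj.2
  have := hmax B (Finset.mem_filter.2 ⟨List.mem_toFinset.2 hB, hBK⟩)
  exact absurd hlt (not_lt.2 this)

/-- Every listed mask is the mask of a subgroup. -/
lemma exists_subgroup {m : ℕ} (hm : m ∈ masks) :
    ∃ K : Subgroup (Equiv.Perm (Fin 4)), Encodes m K := by
  obtain ⟨h0, hc⟩ := masks_closed m hm
  refine ⟨{ carrier := {σ | ∃ i < 24, m.testBit i = true ∧ elt i = σ}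
            one_mem' := ⟨0, by norm_num, h0, elt_zero⟩
            mul_mem' := ?_
            inv_mem' := ?_ }, fun i => ⟨fun hi => ?_, ?_⟩⟩
  · rintro _ _ ⟨i, hi, him, rfl⟩ ⟨j, hj, hjm, rfl⟩
    exact ⟨pmul i j, (elt_pmul i hi j hj).1, (hc i hi him).2 j hj hjm, (elt_pmul i hi j hj).2⟩
  · rintro _ ⟨i, hi, him, rfl⟩
    obtain ⟨j, hj, hjm, hij⟩ := (hc i hi him).1
    refine ⟨j, hj, hjm, eq_inv_of_mul_eq_one_right ?_⟩
    rw [← (elt_pmul i hi j hj).2, hij, elt_zero]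
  · have hi24 : i < 24 := by
      by_contra hlt
      rw [Nat.testBit_lt_two_pow
        ((masks_lt m hm).trans_le (Nat.pow_le_pow_right two_pos (not_lt.1 hlt)))] at hi
      exact Bool.false_ne_true hi
    exact ⟨hi24, i, hi24, hi, rfl⟩
  · rintro ⟨hi, j, hj, hjm, hji⟩
    rwa [← elt_inj j hj i hi hji]

lemma Encodes.le_iff {m k : ℕ} {M K : Subgroup (Equiv.Perm (Fin 4))} (hm : Encodes m M)
    (hk : Encodes k K) : m &&& k = m ↔ M ≤ K := by
  constructor
  · intro h σ hσ
    obtain ⟨i, hi, rfl⟩ := elt_surj σ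
    have := (hm i).2 ⟨hi, hσ⟩
    rw [← h, Nat.testBit_and, Bool.and_eq_true] at this
    exact ((hk i).1 this.2).2
  · intro h
    refine Nat.eq_of_testBit_eq fun i => ?_
    rw [Nat.testBit_and, Bool.eq_iff_iff, Bool.and_eq_true, hm i, hk i]
    exact ⟨And.left, fun hi => ⟨hi, hi.1, h hi.2⟩⟩

lemma Encodes.eq_iff {m k : ℕ} {M K : Subgroup (Equiv.Perm (Fin 4))} (hm : Encodes m M)
    (hk : Encodes k K) : m = k ↔ M = K := by
  constructor
  · rintro rfl
    exact le_antisymm ((hm.le_iff hk).1 (Nat.and_self m)) ((hk.le_iff hm).1 (Nat.and_self m))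
  · rintro rfl
    refine Nat.eq_of_testBit_eq fun i => ?_
    rw [Bool.eq_iff_iff, hm i, hk i]

lemma isMax_of_isCoatom {h m : ℕ} {H : Subgroup (Equiv.Perm (Fin 4))} {M : Subgroup H}
    (hh : Encodes h H) (hm : Encodes m (M.map H.subtype)) (hM : IsCoatom M) :
    isMax h m = true := by
  have hMH : M.map H.subtype ≤ H := H.map_subtype_le M
  unfold isMax
  rw [Bool.and_eq_true, Bool.and_eq_true, bne_iff_ne, beq_iff_eq, List.all_eq_true, hm.le_iff hh,
    Ne, hm.eq_iff hh]
  refine ⟨⟨fun he => hM.1 ?_, hMH⟩, fun k hk => ?_⟩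
  · refine Subgroup.map_injective H.subtype_injective ?_
    rw [he, ← MonoidHom.range_eq_map, H.range_subtype]
  · obtain ⟨K, hkK⟩ := exists_subgroup hk
    by_contra hcon
    simp only [Bool.or_eq_true, Bool.not_eq_true', beq_iff_eq, Bool.and_eq_false_iff, not_or,
      beq_eq_false_iff_ne, not_not, ne_eq] at hcon
    obtain ⟨⟨⟨h1, h2⟩, h3⟩, h4⟩ := hcon
    rw [hm.le_iff hkK] at h1
    rw [hkK.le_iff hh] at h2
    rw [hkK.eq_iff hm] at h3
    rw [hkK.eq_iff hh] at h4
    have hle : M ≤ K.subgroupOf H := Subgroup.map_le_iff_le_comap.1 h1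
    have hback : (K.subgroupOf H).map H.subtype = K := by
      rw [Subgroup.subgroupOf_map_subtype, inf_eq_left.2 h2]
    rcases hM.le_iff.1 hle with ht | he
    · exact h4 (le_antisymm h2 (Subgroup.subgroupOf_eq_top.1 ht))
    · exact h3 (by rw [← hback, he])

lemma hasSq_of {h m : ℕ} {H : Subgroup (Equiv.Perm (Fin 4))} {M : Subgroup H}
    (hh : Encodes h H) (hm : Encodes m (M.map H.subtype)) (hM : ∀ x : H, x ^ 2 ∈ M) :
    hasSq h m = true := by
  refine List.all_eq_true.2 fun i _ => ?_
  rw [Bool.or_eq_true, Bool.not_eq_true', ← Bool.not_eq_true, ← imp_iff_not_or, hh i, hm]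
  rintro ⟨hi, hiH⟩
  obtain ⟨h1, h2⟩ := elt_pmul i hi i hi
  exact ⟨h1, ⟨elt i, hiH⟩ ^ 2, hM _, by simp [h2, pow_two]⟩

lemma hasCube_of {h m : ℕ} {H : Subgroup (Equiv.Perm (Fin 4))} {M : Subgroup H}
    (hh : Encodes h H) (hm : Encodes m (M.map H.subtype)) (hM : ∀ x : H, x ^ 3 ∈ M) :
    hasCube h m = true := by
  refine List.all_eq_true.2 fun i _ => ?_
  rw [Bool.or_eq_true, Bool.not_eq_true', ← Bool.not_eq_true, ← imp_iff_not_or, hh i, hm]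
  rintro ⟨hi, hiH⟩
  obtain ⟨h1, h2⟩ := elt_pmul i hi i hi
  obtain ⟨h3, h4⟩ := elt_pmul i hi _ h1
  exact ⟨h3, ⟨elt i, hiH⟩ ^ 3, hM _, by simp [h2, h4, pow_succ, mul_assoc]⟩

/-- A family of subgroups of `H` whose masks all satisfy the test `Q` is no larger than the number
of listed masks passing the test. -/
lemma ncard_le_filter {H : Subgroup (Equiv.Perm (Fin 4))} (s : Set (Subgroup H)) (Q : ℕ → Bool)
    (hQ : ∀ M ∈ s, ∀ m, Encodes m (M.map H.subtype) → Q m = true) :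
    s.ncard ≤ (masks.filter Q).length := by
  classical
  choose f hf hfe using fun M : Subgroup H => exists_mask (M.map H.subtype)
  refine le_trans ?_ (List.toFinset_card_le _)
  rw [← Set.ncard_coe_finset]
  refine Set.ncard_le_ncard_of_injOn f (fun M hM => ?_) (fun M _ N _ h => ?_)
  · simp only [Finset.mem_coe, List.mem_toFinset, List.mem_filter]
    exact ⟨hf M, hQ M hM _ (hfe M)⟩
  · exact Subgroup.map_injective H.subtype_injective (((hfe M).eq_iff (hfe N)).1 h)

/-- The maximal subgroups of `H ≤ S₄`, counted with weight large enough to pay for the nontrivial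
homomorphisms to `C_2` and `C_3` having them as kernels, number at most nine. -/
lemma coatom_count (H : Subgroup (Equiv.Perm (Fin 4))) :
    {M : Subgroup H | IsCoatom M}.ncard + {M : Subgroup H | IsCoatom M ∧ ∀ x, x ^ 2 ∈ M}.ncard +
      2 * {M : Subgroup H | IsCoatom M ∧ ∀ x, x ^ 3 ∈ M}.ncard ≤ 9 := by
  obtain ⟨h, hh, hH⟩ := exists_mask H
  refine le_trans ?_ (masks_count h hh)
  gcongr
  · exact ncard_le_filter _ _ fun M hM m hm => isMax_of_isCoatom hH hm hM
  · refine ncard_le_filter _ _ fun M hM m hm => ?_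
    rw [isMax_of_isCoatom hH hm hM.1, hasSq_of hH hm hM.2, Bool.and_self]
  · refine ncard_le_filter _ _ fun M hM m hm => ?_
    rw [isMax_of_isCoatom hH hm hM.1, hasCube_of hH hm hM.2, Bool.and_self]

/-! ### Homomorphisms to groups of prime order -/

instance mulZMod_isSimpleGroup (p : ℕ) [Fact p.Prime] : IsSimpleGroup (Multiplicative (ZMod p)) :=
  CommGroup.is_simple_iff_prime_card.2 (by simpa using Fact.out)

lemma hom_surjective {G : Type*} [Group G] {p : ℕ} [Fact p.Prime]
    {χ : G →* Multiplicative (ZMod p)} (hχ : χ ≠ 1) : Function.Surjective χ := by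
  rw [← MonoidHom.range_eq_top]
  refine (Subgroup.Normal.eq_bot_or_eq_top (H := χ.range) inferInstance).resolve_left fun h => hχ ?_
  exact MonoidHom.range_eq_bot_iff.1 h

lemma isCoatom_ker {G : Type*} [Group G] {p : ℕ} [Fact p.Prime]
    {χ : G →* Multiplicative (ZMod p)} (hχ : χ ≠ 1) : IsCoatom χ.ker := by
  have hbot : IsCoatom (⊥ : Subgroup (Multiplicative (ZMod p))) := isCoatom_bot
  exact Subgroup.isCoatom_comap_of_surjective (hom_surjective hχ) hbot

/-- A homomorphism to `C_p` is determined by its kernel and its value at one element outside the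
kernel. -/
lemma hom_ext_of_ker {G : Type*} [Group G] {p : ℕ} [Fact p.Prime]
    {χ ψ : G →* Multiplicative (ZMod p)} (hker : χ.ker = ψ.ker) {g : G} (hg : χ g ≠ 1)
    (h : χ g = ψ g) : χ = ψ := by
  ext x : 1
  have hx : χ x ∈ Subgroup.zpowers (χ g) :=
    mem_zpowers_of_prime_card (p := p) (by simp) hg
  obtain ⟨k, hk⟩ := Subgroup.mem_zpowers_iff.1 hx
  have hmem : x * (g ^ k)⁻¹ ∈ χ.ker := by
    rw [MonoidHom.mem_ker, map_mul, map_inv, map_zpow, hk, mul_inv_cancel]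
  rw [hker, MonoidHom.mem_ker, map_mul, map_inv, map_zpow, mul_inv_eq_one] at hmem
  rw [hmem, ← hk, h]

/-- Each maximal subgroup containing all `p`-th powers is the kernel of at most `p - 1`
homomorphisms to `C_p`, and each nontrivial homomorphism to `C_p` has such a kernel. -/
lemma ncard_hom_le (G : Type*) [Group G] [Finite G] (p : ℕ) [Fact p.Prime] :
    {χ : G →* Multiplicative (ZMod p) | χ ≠ 1}.ncard ≤
      (p - 1) * {M : Subgroup G | IsCoatom M ∧ ∀ x, x ^ p ∈ M}.ncard := by
  classical
  have hex : ∀ M : Subgroup G, ∃ g : G, IsCoatom M → g ∉ M := by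
    intro M
    by_cases hM : IsCoatom M
    · obtain ⟨g, hg⟩ := SetLike.exists_not_mem_of_ne_top M hM.1
      exact ⟨g, fun _ => hg⟩
    · exact ⟨1, fun h => absurd h hM⟩
  choose g hg using hex
  have hcard : {u : Multiplicative (ZMod p) | u ≠ 1}.ncard = p - 1 := by
    have : {u : Multiplicative (ZMod p) | u ≠ 1} = {1}ᶜ := rfl
    rw [this, Set.ncard_compl, Set.ncard_singleton]
    simp
  rw [← hcard, ← Set.ncard_prod]
  refine Set.ncard_le_ncard_of_injOn (fun χ => (χ (g χ.ker), χ.ker)) (fun χ hχ => ?_)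
    (fun χ hχ ψ hψ h => ?_) (Set.toFinite _)
  · refine ⟨hg _ (isCoatom_ker hχ), isCoatom_ker hχ, fun x => ?_⟩
    rw [MonoidHom.mem_ker, map_pow]
    have := pow_card_eq_one' (x := χ x)
    simpa using this
  · obtain ⟨h1, h2⟩ := Prod.mk.inj h
    refine hom_ext_of_ker h2 (g := g χ.ker) (hg _ (isCoatom_ker hχ)) ?_
    rw [h1, h2]

/-- A maximal subgroup missing a central element `c` is normal with quotient generated by the image
of `c`, so it is the kernel of a homomorphism to some `C_p` which sends `c` to the generator. -/
lemma exists_hom_of_isCoatom {G : Type*} [Group G] {c : G} (hc : ∀ g, g * c = c * g)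
    {M : Subgroup G} (hM : IsCoatom M) (hcM : c ∉ M) :
    ∃ p, p.Prime ∧ ∃ ψ : G →* Multiplicative (ZMod p),
      ψ.ker = M ∧ ψ c = Multiplicative.ofAdd 1 := by
  have hcn : (Subgroup.zpowers c).Normal := by
    refine ⟨fun x hx g => ?_⟩
    obtain ⟨k, rfl⟩ := Subgroup.mem_zpowers_iff.1 hx
    have : Commute g (c ^ k) := (show Commute g c from hc g).zpow_right k
    rwa [this.eq, mul_inv_cancel_right]
  have hdec : ∀ g : G, ∃ m ∈ M, ∃ k : ℤ, m * c ^ k = g := by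
    intro g
    have htop : M ⊔ Subgroup.zpowers c = ⊤ :=
      hM.2 _ (lt_of_le_of_ne le_sup_left fun h => hcM (h ▸ Subgroup.mem_sup_right
        (Subgroup.mem_zpowers c)))
    have hg : g ∈ M ⊔ Subgroup.zpowers c := htop ▸ Subgroup.mem_top g
    obtain ⟨m, hm, z, hz, rfl⟩ := Subgroup.mem_sup_of_normal_right.1 hg
    obtain ⟨k, rfl⟩ := Subgroup.mem_zpowers_iff.1 hz
    exact ⟨m, hm, k, rfl⟩
  have hMn : M.Normal := by
    refine ⟨fun x hx g => ?_⟩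
    obtain ⟨m, hm, k, rfl⟩ := hdec g
    have h1 : Commute x (c ^ k) := (show Commute x c from hc x).zpow_right k
    have : m * c ^ k * x * (m * c ^ k)⁻¹ = m * x * m⁻¹ := by
      rw [mul_assoc m, ← h1.eq]; group
    rw [this]
    exact M.mul_mem (M.mul_mem hm hx) (M.inv_mem hm)
  have hgen : ∀ q : G ⧸ M, q ∈ Subgroup.zpowers (c : G ⧸ M) := by
    intro q
    obtain ⟨g, rfl⟩ := QuotientGroup.mk_surjective q
    obtain ⟨m, hm, k, rfl⟩ := hdec g
    refine Subgroup.mem_zpowers_iff.2 ⟨k, ?_⟩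
    rw [QuotientGroup.mk_mul, (QuotientGroup.eq_one_iff m).2 hm, one_mul, QuotientGroup.mk_zpow]
  have hcyc : IsCyclic (G ⧸ M) := ⟨_, hgen⟩
  have hsimple : IsSimpleGroup (G ⧸ M) := by
    have : Nontrivial (G ⧸ M) := QuotientGroup.nontrivial_iff.2 hM.1
    refine ⟨fun N _ => ?_⟩
    have hle : M ≤ N.comap (QuotientGroup.mk' M) := by
      simpa using (QuotientGroup.mk' M).ker_le_comap N
    have hinj := Subgroup.comap_injective (QuotientGroup.mk'_surjective M)
    rcases hM.le_iff.1 hle with h | h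
    · exact Or.inr (hinj (by rw [h, Subgroup.comap_top]))
    · refine Or.inl (hinj ?_)
      rw [h, MonoidHom.comap_bot, QuotientGroup.ker_mk']
  have hprime : (Nat.card (G ⧸ M)).Prime := by
    let _ : CommGroup (G ⧸ M) := hcyc.commGroup
    exact CommGroup.is_simple_iff_prime_card.1 hsimple
  refine ⟨_, hprime, (zmodMulEquivOfGenerator hgen rfl).symm.toMonoidHom.comp
    (QuotientGroup.mk' M), ?_, ?_⟩
  · ext x
    simp
  · simp

/-! ### Maximal subgroups of `H × C_n` -/

/-- A maximal subgroup of `H × C_n` either contains the factor `C_n`, and then comes from a maximal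
subgroup of `H`, or it is the kernel of a homomorphism to some `C_p` with `p ∣ n` which is
normalized on `C_n`, and then it is determined by the restriction of that homomorphism to `H`. -/
lemma card_coatom_prod_le (H : Type*) [Group H] [Finite H] (n : ℕ) (hn : 0 < n) :
    {M : Subgroup (H × Multiplicative (ZMod n)) | IsCoatom M}.ncard ≤
      {M : Subgroup H | IsCoatom M}.ncard +
        ∑ p ∈ n.primeFactors, Nat.card (H →* Multiplicative (ZMod p)) := by
  classical
  have : NeZero n := ⟨hn.ne'⟩
  set c : H × Multiplicative (ZMod n) := (1, Multiplicative.ofAdd 1) with hcdef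
  have hpow : ∀ z : Multiplicative (ZMod n), c ^ (Multiplicative.toAdd z).val = (1, z) := by
    intro z
    refine Prod.ext (by simp [hcdef]) ?_
    simp only [hcdef, Prod.pow_snd, ← ofAdd_nsmul, nsmul_one, ZMod.natCast_zmod_val, ofAdd_toAdd]
  have hc : ∀ g, g * c = c * g := fun g => Prod.ext (by simp [hcdef]) (mul_comm _ _)
  have hsplit : {M : Subgroup (H × Multiplicative (ZMod n)) | IsCoatom M} =
      {M | IsCoatom M ∧ c ∈ M} ∪ {M | IsCoatom M ∧ c ∉ M} := by
    ext M
    by_cases h : c ∈ M <;> simp [h]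
  rw [hsplit]
  refine (Set.ncard_union_le _ _).trans (add_le_add ?_ ?_)
  · have key : ∀ M : Subgroup (H × Multiplicative (ZMod n)), c ∈ M →
        (M.comap (MonoidHom.inl H (Multiplicative (ZMod n)))).comap (MonoidHom.fst H _) = M := by
      intro M hM
      ext ⟨h, z⟩
      have hz : ((1, z) : H × Multiplicative (ZMod n)) ∈ M := hpow z ▸ M.pow_mem hM _
      have : ((h, z) : H × Multiplicative (ZMod n)) = (h, 1) * (1, z) := by simp
      rw [this, M.mul_mem_cancel_right hz]
      simp
    have hsurj : Function.Surjective (MonoidHom.fst H (Multiplicative (ZMod n))) :=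
      Prod.fst_surjective
    refine Set.ncard_le_ncard_of_injOn (fun M => M.comap (MonoidHom.inl H _)) ?_ ?_
    · rintro M ⟨hM, hcM⟩
      have hk := key M hcM
      refine ⟨fun h => hM.1 ?_, fun K hK => ?_⟩
      · rw [← hk, h, Subgroup.comap_top]
      · have hlt := (Subgroup.comap_lt_comap_of_surjective hsurj).2 hK
        rw [hk] at hlt
        exact Subgroup.comap_injective hsurj (by rw [hM.2 _ hlt, Subgroup.comap_top])
    · rintro M ⟨-, hM⟩ N ⟨-, hN⟩ h
      rw [← key M hM, ← key N hN]
      exact congrArg _ h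
  · have hfin : ∀ p : n.primeFactors, Finite (H →* Multiplicative (ZMod p)) := fun p => by
      have : NeZero (p : ℕ) := ⟨(Nat.prime_of_mem_primeFactors p.2).ne_zero⟩
      exact DFunLike.finite _
    have hdata : ∀ M : Subgroup (H × Multiplicative (ZMod n)), IsCoatom M ∧ c ∉ M →
        ∃ s : Σ p : n.primeFactors, (H →* Multiplicative (ZMod p)), ∀ h z, (h, z) ∈ M ↔
          s.2 h * Multiplicative.ofAdd 1 ^ (Multiplicative.toAdd z).val = 1 := by
      rintro M ⟨hM, hcM⟩
      obtain ⟨p, hp, ψ, hker, hψ⟩ := exists_hom_of_isCoatom hc hM hcM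
      have hpn : p ∣ n := by
        have h1 : c ^ n = 1 := by
          refine Prod.ext (by simp [hcdef]) ?_
          simp [hcdef, ← ofAdd_nsmul]
        have h2 : (Multiplicative.ofAdd (1 : ZMod p)) ^ n = 1 := by
          rw [← hψ, ← map_pow, h1, map_one]
        rw [← ofAdd_nsmul, nsmul_one, ofAdd_eq_one] at h2
        exact (ZMod.natCast_eq_zero_iff n p).1 h2
      refine ⟨⟨⟨p, Nat.mem_primeFactors.2 ⟨hp, hpn, hn.ne'⟩⟩, ψ.comp (MonoidHom.inl H _)⟩,
        fun h z => ?_⟩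
      have hprod : ((h, z) : H × Multiplicative (ZMod n)) = (h, 1) * (1, z) := by simp
      rw [← hker, MonoidHom.mem_ker, hprod, map_mul, ← hpow z, map_pow, hψ]
      rfl
    choose f hf using hdata
    rw [← Nat.card_coe_set_eq]
    calc _ ≤ Nat.card (Σ p : n.primeFactors, (H →* Multiplicative (ZMod p))) := by
          refine Nat.card_le_card_of_injective (fun M => f M.1 M.2) ?_
          rintro ⟨M, hM⟩ ⟨N, hN⟩ h
          refine Subtype.ext (Subgroup.ext fun ⟨x, z⟩ => ?_)
          have h' : f M hM = f N hN := h
          rw [hf M hM, hf N hN, h']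
      _ = _ := by
          rw [Nat.card_sigma]
          exact Finset.sum_coe_sort n.primeFactors
            fun p => Nat.card (H →* Multiplicative (ZMod p))

/-- A subgroup of `S₄` has order dividing `24`, so beyond the trivial homomorphism to each `C_p` only
the primes `2` and `3` contribute. -/
lemma sum_card_hom_le (H : Subgroup (Equiv.Perm (Fin 4))) (n : ℕ) :
    ∑ p ∈ n.primeFactors, Nat.card (H →* Multiplicative (ZMod p)) ≤
      n.primeFactors.card + ({χ : H →* Multiplicative (ZMod 2) | χ ≠ 1}.ncard +
        {χ : H →* Multiplicative (ZMod 3) | χ ≠ 1}.ncard) := by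
  classical
  let e : ℕ → ℕ := fun p => {χ : H →* Multiplicative (ZMod p) | χ ≠ 1}.ncard
  have hcard : ∀ p ∈ n.primeFactors, Nat.card (H →* Multiplicative (ZMod p)) = 1 + e p := by
    intro p hp
    have : NeZero p := ⟨(Nat.prime_of_mem_primeFactors hp).ne_zero⟩
    have : Finite (H →* Multiplicative (ZMod p)) := DFunLike.finite _
    have h := Set.ncard_add_ncard_compl {(1 : H →* Multiplicative (ZMod p))}
    rw [Set.ncard_singleton] at h
    exact h.symm
  have hzero : ∀ p ∈ n.primeFactors, e p ≠ 0 → p ∈ ({2, 3} : Finset ℕ) := by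
    intro p hp he
    have hpp := Nat.prime_of_mem_primeFactors hp
    have : Fact p.Prime := ⟨hpp⟩
    obtain ⟨χ, hχ⟩ := Set.nonempty_of_ncard_ne_zero he
    have h1 : p ∣ Nat.card H := by
      simpa using Subgroup.card_dvd_of_surjective χ (hom_surjective hχ)
    have h2 : Nat.card (Equiv.Perm (Fin 4)) = 2 ^ 3 * 3 := by
      rw [Nat.card_eq_fintype_card, Fintype.card_perm, Fintype.card_fin]; rfl
    have h3 := h1.trans H.card_subgroup_dvd_card
    rw [h2, hpp.dvd_mul] at h3
    rcases h3 with h3 | h3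
    · simp [(Nat.prime_dvd_prime_iff_eq hpp Nat.prime_two).1 (hpp.dvd_of_dvd_pow h3)]
    · simp [(Nat.prime_dvd_prime_iff_eq hpp Nat.prime_three).1 h3]
  rw [Finset.sum_congr rfl hcard, Finset.sum_add_distrib, Finset.sum_const, smul_eq_mul, mul_one]
  refine Nat.add_le_add_left ?_ _
  calc ∑ p ∈ n.primeFactors, e p ≤ ∑ p ∈ ({2, 3} : Finset ℕ), e p :=
        Finset.sum_le_sum_of_ne_zero hzero
    _ = e 2 + e 3 := Finset.sum_pair (by norm_num)

/-- **Lemma 2.4.** If `H` is a subgroup of `S₄` and `n` is a positive integer, then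
`G = H × C_n` has at most `9 + ω(n)` maximal subgroups. -/
theorem card_maximal_subgroups_subS4_mul_cyclic_le
    (H : Subgroup (Equiv.Perm (Fin 4))) (n : ℕ) (hn : 0 < n) :
    {M : Subgroup (↥H × Multiplicative (ZMod n)) | IsCoatom M}.ncard ≤
      9 + n.primeFactors.card := by
  have h1 := card_coatom_prod_le H n hn
  have h2 := sum_card_hom_le H n
  have : Fact (Nat.Prime 3) := ⟨Nat.prime_three⟩
  have h3 := ncard_hom_le H 2
  have h4 := ncard_hom_le H 3
  have h5 := coatom_count H
  omega
end

section
/- Let H be a subgroup of the symmetric group S₄ and let n be a positive integer, and set G = H × C_n. Then the number of maximal subgroups of G equals the number of maximal subgroups of H, plus ω(n), plus the sum over all primes p dividing n of (|Hom(H, C_p)| − 1), where Hom(H, C_p) is the set of group homomorphisms from H to the cyclic group C_p. -/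
/-!
Maximal subgroups of `H × C_n`, for an arbitrary finite group `H`.

Split the maximal subgroups `M` of `H × C` (with `C = C_n`) according to whether `M` contains the
factor `1 × C`, the kernel of the first projection. Those that do are the preimages of the maximal
subgroups of `H`. If `M` does not, then `M · (1 × C)` is everything; as `1 × C` is central, `M` is
normal and the quotient by `M` is generated by the image of `C`. That quotient is therefore cyclic
and simple, so of prime order `p ∣ n`, and identifying it with `ZMod p` in such a way that the
image of the generator of `C` becomes `1` presents `M` as the kernel of `(h, c) ↦ φ h + (c mod p)`
for some `φ : H → C_p` (`exists_twistedKer`). Conversely, every pair `(p, φ)` gives such a maximal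
subgroup, and the pair is recovered from the kernel (`twistedKer_injective`). Hence there are
`∑_{p ∣ n} |Hom(H, C_p)|` maximal subgroups of the second kind; splitting off the trivial
homomorphism in each summand gives the term `ω(n)`.
-/

namespace MaxSubProd

open Subgroup

variable {H : Type*} [Group H]

/-- Reduction modulo `p` from `C_n` to `C_p`, written multiplicatively. -/
def reduction {p n : ℕ} (h : p ∣ n) : Multiplicative (ZMod n) →* Multiplicative (ZMod p) :=
  AddMonoidHom.toMultiplicative (ZMod.castHom h (ZMod p)).toAddMonoidHom

lemma reduction_ofAdd_natCast {p n : ℕ} (h : p ∣ n) (k : ℕ) :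
    reduction h (Multiplicative.ofAdd (k : ZMod n)) = Multiplicative.ofAdd (k : ZMod p) := by
  change Multiplicative.ofAdd (ZMod.castHom h (ZMod p) (k : ZMod n)) = _
  rw [map_natCast]

lemma reduction_surjective {p n : ℕ} (h : p ∣ n) : Function.Surjective (reduction h) :=
  ZMod.castHom_surjective h

/-- The kernel of `(h, c) ↦ φ h + (c mod p)` on `H × C_n`, where `φ : H → C_p`. -/
def twistedKer {p n : ℕ} (h : p ∣ n) (φ : H →* Multiplicative (ZMod p)) :
    Subgroup (H × Multiplicative (ZMod n)) :=
  (φ.coprod (reduction h)).ker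

lemma mem_twistedKer {p n : ℕ} (h : p ∣ n) (φ : H →* Multiplicative (ZMod p))
    (x : H × Multiplicative (ZMod n)) :
    x ∈ twistedKer h φ ↔ φ x.1 * reduction h x.2 = 1 := by
  rw [twistedKer, MonoidHom.mem_ker, MonoidHom.coprod_apply]

lemma isCoatom_twistedKer {p n : ℕ} (hp : p.Prime) (h : p ∣ n)
    (φ : H →* Multiplicative (ZMod p)) : IsCoatom (twistedKer h φ) := by
  have : Fact p.Prime := ⟨hp⟩
  have : IsSimpleGroup (Multiplicative (ZMod p)) :=
    isSimpleGroup_of_prime_card (p := p) (by simp)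
  have hs : Function.Surjective (φ.coprod (reduction h)) := fun y ↦ by
    obtain ⟨c, rfl⟩ := reduction_surjective h y
    exact ⟨(1, c), by simp⟩
  exact isCoatom_comap_of_surjective hs isCoatom_bot

lemma not_ker_fst_le_twistedKer {p n : ℕ} (hp : p.Prime) (h : p ∣ n)
    (φ : H →* Multiplicative (ZMod p)) :
    ¬ (MonoidHom.fst H (Multiplicative (ZMod n))).ker ≤ twistedKer h φ := by
  intro hle
  have : Fact p.Prime := ⟨hp⟩
  obtain ⟨c, hc⟩ := reduction_surjective h (Multiplicative.ofAdd (1 : ZMod p))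
  have hm : ((1 : H), c) ∈ twistedKer h φ := hle (MonoidHom.mem_ker.2 rfl)
  rw [mem_twistedKer, map_one, one_mul, hc] at hm
  exact one_ne_zero (α := ZMod p) hm

/-- The prime is determined by the intersection of the kernel with `1 × C_n`. -/
lemma dvd_of_twistedKer_eq {p q n : ℕ} (hp : p ∣ n) (hq : q ∣ n)
    {φ : H →* Multiplicative (ZMod p)} {ψ : H →* Multiplicative (ZMod q)}
    (he : twistedKer hp φ = twistedKer hq ψ) : q ∣ p := by
  have hm : ((1 : H), Multiplicative.ofAdd (p : ZMod n)) ∈ twistedKer hp φ := by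
    rw [mem_twistedKer, map_one, one_mul, reduction_ofAdd_natCast, ZMod.natCast_self, ofAdd_zero]
  rw [he, mem_twistedKer, map_one, one_mul, reduction_ofAdd_natCast] at hm
  exact (ZMod.natCast_eq_zero_iff p q).1 hm

lemma twistedKer_injective (n : ℕ) :
    Function.Injective fun x : (Σ p : n.primeFactors, (H →* Multiplicative (ZMod p))) ↦
      twistedKer (Nat.dvd_of_mem_primeFactors x.1.2) x.2 := by
  rintro ⟨⟨p, hp⟩, φ⟩ ⟨⟨q, hq⟩, ψ⟩ he
  have hpn := Nat.dvd_of_mem_primeFactors hp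
  have hqn := Nat.dvd_of_mem_primeFactors hq
  obtain rfl : p = q :=
    Nat.dvd_antisymm (dvd_of_twistedKer_eq hqn hpn he.symm) (dvd_of_twistedKer_eq hpn hqn he)
  suffices φ = ψ by rw [this]
  ext h
  obtain ⟨c, hc⟩ := reduction_surjective hpn (φ h)⁻¹
  have hm : (h, c) ∈ twistedKer hpn φ := by rw [mem_twistedKer, hc, mul_inv_cancel]
  change twistedKer hpn φ = twistedKer hpn ψ at he
  rw [he, mem_twistedKer, hc, mul_inv_eq_one] at hm
  exact congrArg _ hm.symm

/-- If the maximal subgroup `M` does not contain `1 × C`, then `M · (1 × C) = H × C`. -/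
lemma exists_mk_mem {C : Type*} [CommGroup C] {M : Subgroup (H × C)} (hM : IsCoatom M)
    (hC : ¬ (MonoidHom.fst H C).ker ≤ M) (x : H × C) :
    ∃ m ∈ M, ∃ c : C, m * (1, c) = x := by
  have htop : M ⊔ (MonoidHom.fst H C).ker = ⊤ := hM.2 _ (left_lt_sup.2 hC)
  obtain ⟨m, hm, k, hk, hx⟩ := mem_sup_of_normal_right.1 (htop ▸ mem_top x)
  refine ⟨m, hm, k.2, ?_⟩
  rw [← hx]
  congr 1
  exact Prod.ext (MonoidHom.mem_ker.1 hk).symm rfl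

/-- `M` is normalized by itself and by the central factor `1 × C`, which together generate. -/
lemma normal_of_not_le {C : Type*} [CommGroup C] {M : Subgroup (H × C)} (hM : IsCoatom M)
    (hC : ¬ (MonoidHom.fst H C).ker ≤ M) : M.Normal := by
  refine ⟨fun y hy x ↦ ?_⟩
  obtain ⟨m, hm, c, rfl⟩ := exists_mk_mem hM hC x
  have hcomm : ((1 : H), c) * y * ((1 : H), c)⁻¹ = y := by
    ext <;> simp
  have : m * (1, c) * y * (m * (1, c))⁻¹ = m * ((1, c) * y * (1, c)⁻¹) * m⁻¹ := by group
  rw [this, hcomm]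
  exact M.mul_mem (M.mul_mem hm hy) (M.inv_mem hm)

/-- Every maximal subgroup of `H × C_n` not containing `1 × C_n` is a twisted kernel. -/
lemma exists_twistedKer [Finite H] {n : ℕ} (hn : n ≠ 0)
    {M : Subgroup (H × Multiplicative (ZMod n))} (hM : IsCoatom M)
    (hC : ¬ (MonoidHom.fst H (Multiplicative (ZMod n))).ker ≤ M) :
    ∃ (p : ℕ) (hp : p ∈ n.primeFactors) (φ : H →* Multiplicative (ZMod p)),
      twistedKer (Nat.dvd_of_mem_primeFactors hp) φ = M := by
  have : NeZero n := ⟨hn⟩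
  have hMn : M.Normal := normal_of_not_le hM hC
  let Q := (H × Multiplicative (ZMod n)) ⧸ M
  let π : H × Multiplicative (ZMod n) →* Q := QuotientGroup.mk' M
  have hπ : Function.Surjective π := QuotientGroup.mk'_surjective M
  let g : Q := π (1, Multiplicative.ofAdd 1)
  -- The image of the generator of `C_n` generates the quotient.
  have hc (c : Multiplicative (ZMod n)) : π (1, c) = g ^ (c.toAdd.val) := by
    rw [← map_pow, Prod.pow_mk, one_pow, ← ofAdd_nsmul, nsmul_one, ZMod.natCast_zmod_val]
    rfl
  have hg (y : Q) : y ∈ zpowers g := by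
    obtain ⟨x, rfl⟩ := hπ y
    obtain ⟨m, hm, c, rfl⟩ := exists_mk_mem hM hC x
    have hm1 : π m = 1 := (QuotientGroup.eq_one_iff m).2 hm
    rw [map_mul, hm1, one_mul, hc]
    exact npow_mem_zpowers g _
  have : IsCyclic Q := ⟨g, hg⟩
  have : Nontrivial Q := QuotientGroup.nontrivial_iff.2 hM.1
  have hsimple : IsSimpleGroup Q := by
    refine ⟨fun N _ ↦ ?_⟩
    have hle : M ≤ N.comap π := fun m hm ↦ by
      have hm1 : π m = 1 := (QuotientGroup.eq_one_iff m).2 hm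
      rw [mem_comap, hm1]
      exact N.one_mem
    rcases hM.le_iff.1 hle with h | h
    · exact Or.inr (comap_injective hπ (h.trans (comap_top π).symm))
    · refine Or.inl (comap_injective hπ (h.trans ?_))
      exact (QuotientGroup.ker_mk' M).symm
  have hprime : (Nat.card Q).Prime := Group.is_simple_iff_prime_card.1 hsimple
  have hdvd : Nat.card Q ∣ n := by
    rw [← orderOf_eq_card_of_forall_mem_zpowers hg, orderOf_dvd_iff_pow_eq_one, ← map_pow,
      Prod.pow_mk, one_pow, ← ofAdd_nsmul, nsmul_one, ZMod.natCast_self]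
    exact map_one π
  let e := (zmodMulEquivOfGenerator hg rfl).symm
  have heg : e g = Multiplicative.ofAdd 1 := zmodMulEquivOfGenerator_symm_apply_generator hg rfl
  have he (c : Multiplicative (ZMod n)) : reduction hdvd c = e (π (1, c)) := by
    have : c = Multiplicative.ofAdd ((c.toAdd.val : ℕ) : ZMod n) := by
      rw [ZMod.natCast_zmod_val]; rfl
    rw [hc, map_pow, heg, ← ofAdd_nsmul, nsmul_one]
    conv_lhs => rw [this]
    exact reduction_ofAdd_natCast hdvd _
  refine ⟨Nat.card Q, Nat.mem_primeFactors.2 ⟨hprime, hdvd, hn⟩,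
    e.toMonoidHom.comp (π.comp (MonoidHom.inl _ _)), ?_⟩
  ext ⟨h, c⟩
  rw [mem_twistedKer, he]
  change e (π (h, 1)) * e (π (1, c)) = 1 ↔ _
  rw [← map_mul, ← map_mul, Prod.mk_mul_mk, one_mul, mul_one, EmbeddingLike.map_eq_one_iff]
  exact QuotientGroup.eq_one_iff _

lemma ncard_not_le [Finite H] {n : ℕ} (hn : n ≠ 0) :
    {M : Subgroup (H × Multiplicative (ZMod n)) |
      IsCoatom M ∧ ¬ (MonoidHom.fst H (Multiplicative (ZMod n))).ker ≤ M}.ncard =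
      ∑ p ∈ n.primeFactors, Nat.card (H →* Multiplicative (ZMod p)) := by
  have hr : {M : Subgroup (H × Multiplicative (ZMod n)) |
      IsCoatom M ∧ ¬ (MonoidHom.fst H (Multiplicative (ZMod n))).ker ≤ M} =
      Set.range fun x : (Σ p : n.primeFactors, (H →* Multiplicative (ZMod p))) ↦
        twistedKer (Nat.dvd_of_mem_primeFactors x.1.2) x.2 := by
    ext M
    constructor
    · rintro ⟨hM, hC⟩
      obtain ⟨p, hp, φ, rfl⟩ := exists_twistedKer hn hM hC
      exact ⟨⟨⟨p, hp⟩, φ⟩, rfl⟩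
    · rintro ⟨⟨⟨p, hp⟩, φ⟩, rfl⟩
      have hp' := Nat.prime_of_mem_primeFactors hp
      exact ⟨isCoatom_twistedKer hp' _ φ, not_ker_fst_le_twistedKer hp' _ φ⟩
  have (p : n.primeFactors) : Finite (H →* Multiplicative (ZMod p)) := by
    have : NeZero (p : ℕ) := ⟨(Nat.prime_of_mem_primeFactors p.2).ne_zero⟩
    exact DFunLike.finite _
  rw [hr, ← Nat.card_coe_set_eq, Nat.card_range_of_injective (twistedKer_injective n),
    Nat.card_sigma]
  exact Finset.sum_coe_sort n.primeFactors fun p ↦ Nat.card (H →* Multiplicative (ZMod p))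

lemma ncard_le (C : Type*) [CommGroup C] :
    {M : Subgroup (H × C) | IsCoatom M ∧ (MonoidHom.fst H C).ker ≤ M}.ncard =
      {M : Subgroup H | IsCoatom M}.ncard := by
  have hs : Function.Surjective (MonoidHom.fst H C) := Prod.fst_surjective
  rw [← Set.ncard_image_of_injective _ (comap_injective hs)]
  congr 1
  ext M
  constructor
  · rintro ⟨hM, hC⟩
    have hcm : (M.map (MonoidHom.fst H C)).comap (MonoidHom.fst H C) = M := comap_map_eq_self hC
    refine ⟨M.map (MonoidHom.fst H C), ⟨fun h ↦ hM.1 ?_, fun K hK ↦ ?_⟩, hcm⟩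
    · rw [← hcm, h, comap_top]
    · have hlt : M < K.comap (MonoidHom.fst H C) := by
        rw [← hcm]
        exact (comap_lt_comap_of_surjective hs).2 hK
      exact comap_injective hs ((hM.2 _ hlt).trans (comap_top _).symm)
  · rintro ⟨K, hK, rfl⟩
    exact ⟨isCoatom_comap_of_surjective hs hK, MonoidHom.ker_le_comap _ _⟩

lemma ncard_isCoatom_prod [Finite H] {n : ℕ} (hn : n ≠ 0) :
    {M : Subgroup (H × Multiplicative (ZMod n)) | IsCoatom M}.ncard =
      {M : Subgroup H | IsCoatom M}.ncard + n.primeFactors.card +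
        ∑ p ∈ n.primeFactors, (Nat.card (H →* Multiplicative (ZMod p)) - 1) := by
  have : NeZero n := ⟨hn⟩
  have hsum : n.primeFactors.card +
      ∑ p ∈ n.primeFactors, (Nat.card (H →* Multiplicative (ZMod p)) - 1) =
      ∑ p ∈ n.primeFactors, Nat.card (H →* Multiplicative (ZMod p)) := by
    rw [Finset.card_eq_sum_ones, ← Finset.sum_add_distrib]
    refine Finset.sum_congr rfl fun p hp ↦ ?_
    have : NeZero p := ⟨(Nat.prime_of_mem_primeFactors hp).ne_zero⟩
    have : Finite (H →* Multiplicative (ZMod p)) := DFunLike.finite _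
    have : 0 < Nat.card (H →* Multiplicative (ZMod p)) := Nat.card_pos
    omega
  rw [add_assoc, hsum, ← ncard_not_le hn, ← ncard_le (H := H) (Multiplicative (ZMod n)),
    ← Set.ncard_union_eq _ (Set.toFinite _) (Set.toFinite _)]
  · congr 1
    ext M
    simp only [Set.mem_union, Set.mem_ofPred_eq]
    tauto
  · exact Set.disjoint_left.2 fun M h1 h2 ↦ h2.2 h1.2

end MaxSubProd


/-- **Goursat-type counting.** If `H` is a subgroup of `S₄`, `n` is a positive integer and
`G = H × C_n`, then the number of maximal subgroups of `G` equals the number of maximal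
subgroups of `H`, plus `ω(n)`, plus `∑_{p | n prime} (|Hom(H, C_p)| - 1)`. -/
theorem card_maximal_subgroups_subS4_mul_cyclic_eq
    (H : Subgroup (Equiv.Perm (Fin 4))) (n : ℕ) (hn : 0 < n) :
    {M : Subgroup (↥H × Multiplicative (ZMod n)) | IsCoatom M}.ncard =
      {M : Subgroup ↥H | IsCoatom M}.ncard + n.primeFactors.card +
        ∑ p ∈ n.primeFactors, (Nat.card (↥H →* Multiplicative (ZMod p)) - 1) := by
  exact MaxSubProd.ncard_isCoatom_prod hn.ne'
end

section
/- Let m and n be positive integers and let G be a finite group that is an (internal) semidirect product of a normal cyclic subgroup A of order m by a cyclic subgroup B of order n (i.e. A is normal in G, A ∩ B is trivial, and AB = G). Then G has at most m + ω(n) maximal subgroups. -/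
/-!
Split the maximal subgroups `M` of `G = A ⋊ B` according to whether `A ≤ M`.

If `A ≤ M`, then `M` corresponds to a maximal subgroup of `G ⧸ A`, which is cyclic of order `n`.
A subgroup of a finite cyclic group is determined by its index, and maximal ones have prime index,
so there are at most `ω(n)` such `M`.

If `A ≰ M`, then `M ⊔ A = ⊤`. Every subgroup of the cyclic normal subgroup `A` is normal in `G`,
and maximality of `M` makes `M ⊓ A` a maximal subgroup of `A`, of prime index `p ∣ m`; thus `M ⊓ A`
is determined by `p`. If `b` generates `B`, then `M` contains `b * a` for some `a ∈ A`, and `M` is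
generated by `M ⊓ A` and `b * a`, so `M` is determined by `p` and the coset `a (M ⊓ A)`. This
leaves at most `p` possibilities for each `p`, and the sum of the primes dividing `m` is at
most `m`.
-/

lemma eq_range_powMonoidHom_index {C : Type*} [CommGroup C] [Finite C] [IsCyclic C]
    (L : Subgroup C) : L = (powMonoidHom L.index : C →* C).range := by
  symm
  have hle : (powMonoidHom L.index : C →* C).range ≤ L := by
    rintro _ ⟨c, rfl⟩
    exact L.pow_index_mem c
  refine Subgroup.eq_of_le_of_card_ge hle (Nat.le_of_eq ?_)
  have h1 := L.card_mul_index
  have h2 := (powMonoidHom L.index : C →* C).range.card_mul_index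
  rw [IsCyclic.index_powMonoidHom_range, Nat.gcd_eq_right L.index_dvd_card] at h2
  exact Nat.eq_of_mul_eq_mul_right (Nat.pos_of_ne_zero L.index_ne_zero_of_finite) (h1.trans h2.symm)

lemma eq_of_index_eq_of_isCyclic {C : Type*} [Group C] [Finite C] [IsCyclic C]
    {L K : Subgroup C} (h : L.index = K.index) : L = K := by
  let _ : CommGroup C := IsCyclic.commGroup
  rw [eq_range_powMonoidHom_index L, h, ← eq_range_powMonoidHom_index K]

lemma index_prime_of_isCoatom_of_isCyclic {C : Type*} [Group C] [Finite C] [IsCyclic C]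
    {L : Subgroup C} (hL : IsCoatom L) : L.index.Prime := by
  let _ : CommGroup C := IsCyclic.commGroup
  obtain ⟨p, hp, hpd⟩ := Nat.exists_prime_and_dvd (mt Subgroup.index_eq_one.1 hL.1)
  have hidx : (powMonoidHom p : C →* C).range.index = p := by
    rw [IsCyclic.index_powMonoidHom_range, Nat.gcd_eq_right (hpd.trans L.index_dvd_card)]
  have hne : (powMonoidHom p : C →* C).range ≠ ⊤ := by
    intro h
    rw [h, Subgroup.index_top] at hidx
    exact hp.ne_one hidx.symm
  have hle : L ≤ (powMonoidHom p : C →* C).range := by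
    obtain ⟨k, hk⟩ := hpd
    rw [eq_range_powMonoidHom_index L, hk]
    rintro _ ⟨c, rfl⟩
    exact ⟨c ^ k, by simp [← pow_mul, mul_comm]⟩
  rcases hL.le_iff.1 hle with h | h
  · exact absurd h hne
  · rw [← h, hidx]
    exact hp

/-- Conjugation acts on a cyclic normal subgroup by a power map, hence preserves its subgroups. -/
lemma normal_map_subtype_of_isCyclic {G : Type*} [Group G] (A : Subgroup G) [A.Normal]
    [IsCyclic A] (L : Subgroup A) : (L.map A.subtype).Normal := by
  refine ⟨?_⟩
  rintro _ ⟨x, hx, rfl⟩ g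
  obtain ⟨k, hk⟩ := MonoidHom.map_cyclic (MulAut.conjNormal g : MulAut A).toMonoidHom
  refine ⟨x ^ k, L.zpow_mem hx k, ?_⟩
  rw [← hk x]
  simp

lemma isCoatom_subgroupOf {G : Type*} [Group G] [Finite G] (A : Subgroup G) [A.Normal]
    [IsCyclic A] {M : Subgroup G} (hM : IsCoatom M) (hA : ¬ A ≤ M) :
    IsCoatom (M.subgroupOf A) := by
  refine ⟨fun h => hA (Subgroup.subgroupOf_eq_top.1 h), fun L hL => ?_⟩
  have := normal_map_subtype_of_isCyclic A L
  have htop : L.map A.subtype ⊔ M = ⊤ := by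
    rcases hM.le_iff.1 (le_sup_right : M ≤ L.map A.subtype ⊔ M) with h | h
    · exact h
    · refine absurd (fun x hx => ?_) hL.not_ge
      exact sup_eq_right.1 h ⟨x, hx, rfl⟩
  refine eq_top_iff.2 fun a _ => ?_
  -- Dedekind's modular law: an element of `A = A ⊓ L M` lies in `L (A ⊓ M) = L`.
  obtain ⟨_, ⟨l, hl, rfl⟩, y, hy, hly⟩ :=
    Subgroup.mem_sup_of_normal_left.1 (htop ▸ Subgroup.mem_top (a : G))
  have hy' : l⁻¹ * a ∈ M.subgroupOf A := by
    have : ((l⁻¹ * a : A) : G) = y := by simp [← hly]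
    rw [Subgroup.mem_subgroupOf, this]
    exact hy
  simpa using L.mul_mem hl (hL.le hy')

lemma ncard_coatoms_ge_le {G : Type*} [Group G] [Finite G] (A : Subgroup G) [A.Normal]
    [IsCyclic (G ⧸ A)] :
    {M : Subgroup G | IsCoatom M ∧ A ≤ M}.ncard ≤ A.index.primeFactors.card := by
  have hmap : ∀ M : Subgroup G, A ≤ M → (M.map (QuotientGroup.mk' A)).index = M.index :=
    fun M h => Subgroup.index_map_eq M (QuotientGroup.mk'_surjective A) (by simpa using h)
  rw [← Set.ncard_coe_finset]
  refine Set.ncard_le_ncard_of_injOn Subgroup.index ?_ ?_ (Finset.finite_toSet _)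
  · rintro M ⟨hM, hA⟩
    have hcoatom : IsCoatom (M.map (QuotientGroup.mk' A)) := by
      refine ⟨fun h => hM.1 ?_, fun K hK => ?_⟩
      · rw [← Subgroup.index_eq_one, ← hmap M hA, h, Subgroup.index_top]
      · have hle : M ≤ K.comap (QuotientGroup.mk' A) := Subgroup.map_le_iff_le_comap.1 hK.le
        rcases hM.le_iff.1 hle with h | h
        · rw [← Subgroup.map_comap_eq_self_of_surjective (QuotientGroup.mk'_surjective A) K, h,
            Subgroup.map_top_of_surjective _ (QuotientGroup.mk'_surjective A)]
        · rw [← h, Subgroup.map_comap_eq_self_of_surjective (QuotientGroup.mk'_surjective A)] at hK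
          exact absurd rfl hK.ne
    have hp := index_prime_of_isCoatom_of_isCyclic hcoatom
    rw [hmap M hA] at hp
    exact Nat.mem_primeFactors.2
      ⟨hp, Subgroup.index_dvd_of_le hA, A.index_ne_zero_of_finite⟩
  · rintro M ⟨-, hM⟩ K ⟨-, hK⟩ h
    have h1 : M.map (QuotientGroup.mk' A) = K.map (QuotientGroup.mk' A) :=
      eq_of_index_eq_of_isCyclic (by rw [hmap M hM, hmap K hK, h])
    have h2 := congrArg (Subgroup.comap (QuotientGroup.mk' A)) h1
    rwa [Subgroup.comap_map_eq_self (by simpa using hM),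
      Subgroup.comap_map_eq_self (by simpa using hK)] at h2

/-- If `A` and `b` generate `G`, the maximal subgroups meeting `A` in a given proper subgroup `N`
inject into the cosets of `N` in `A`, through the coset `{a | b * a ∈ M}`. -/
lemma ncard_coatoms_subgroupOf_eq_le {G : Type*} [Group G] [Finite G] (A : Subgroup G) [A.Normal]
    (b : G) (hb : A ⊔ Subgroup.zpowers b = ⊤) (N : Subgroup A) :
    {M : Subgroup G | IsCoatom M ∧ ¬ A ≤ M ∧ M.subgroupOf A = N}.ncard ≤ N.index := by
  have hex : ∀ M : Subgroup G, IsCoatom M ∧ ¬ A ≤ M ∧ M.subgroupOf A = N →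
      ∃ a : A, b * a ∈ M := by
    rintro M ⟨hM, hA, -⟩
    have htop : M ⊔ A = ⊤ := by
      rcases hM.le_iff.1 (le_sup_left : M ≤ M ⊔ A) with h | h
      · exact h
      · exact absurd (sup_eq_left.1 h) hA
    obtain ⟨y, hy, a, ha, h⟩ := Subgroup.mem_sup_of_normal_right.1 (htop ▸ Subgroup.mem_top b)
    exact ⟨⟨a⁻¹, A.inv_mem ha⟩, by simpa [← h] using hy⟩
  -- The value of `f` at an `M` that misses the coset `b A` is irrelevant.
  classical
  let f : Subgroup G → A ⧸ N := fun M =>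
    if h : ∃ a : A, b * a ∈ M then QuotientGroup.mk h.choose else QuotientGroup.mk 1
  have hf : ∀ M : Subgroup G, IsCoatom M ∧ ¬ A ≤ M ∧ M.subgroupOf A = N →
      ∃ a : A, b * a ∈ M ∧ f M = QuotientGroup.mk a := fun M hM =>
    ⟨(hex M hM).choose, (hex M hM).choose_spec, dif_pos (hex M hM)⟩
  have hcard : (Set.univ : Set (A ⧸ N)).ncard = N.index := by
    rw [Set.ncard_univ, Subgroup.index]
  rw [← hcard]
  refine Set.ncard_le_ncard_of_injOn f (fun _ _ => Set.mem_univ _) ?_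
  intro M hM K hK hMK
  obtain ⟨a, ha, hfa⟩ := hf M hM
  obtain ⟨c, hc, hfc⟩ := hf K hK
  rw [hfa, hfc, QuotientGroup.eq] at hMK
  have hmem : ∀ x : A, (x : G) ∈ M ↔ (x : G) ∈ K := fun x => by
    rw [← Subgroup.mem_subgroupOf, ← Subgroup.mem_subgroupOf, hM.2.2, hK.2.2]
  have hcM : b * c ∈ M := by
    have : ((a⁻¹ * c : A) : G) ∈ M := by
      rw [← Subgroup.mem_subgroupOf, hM.2.2]
      exact hMK
    simpa [mul_assoc] using M.mul_mem ha this
  have hgen : A ⊔ Subgroup.zpowers (b * c) = ⊤ := by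
    rw [eq_top_iff, ← hb, sup_le_iff, Subgroup.zpowers_le]
    refine ⟨le_sup_left, ?_⟩
    have h1 : b * c ∈ A ⊔ Subgroup.zpowers (b * c) :=
      Subgroup.mem_sup_right (Subgroup.mem_zpowers _)
    have h2 : (c : G) ∈ A ⊔ Subgroup.zpowers (b * c) := Subgroup.mem_sup_left c.2
    simpa using Subgroup.mul_mem _ h1 (Subgroup.inv_mem _ h2)
  have hle : M ≤ K := by
    intro x hx
    obtain ⟨d, hd, z, hz, rfl⟩ := Subgroup.mem_sup_of_normal_left.1 (hgen ▸ Subgroup.mem_top x)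
    have hzM : z ∈ M := (Subgroup.zpowers_le.2 hcM) hz
    have hzK : z ∈ K := (Subgroup.zpowers_le.2 hc) hz
    exact K.mul_mem ((hmem ⟨d, hd⟩).1 ((M.mul_mem_cancel_right hzM).1 hx)) hzK
  rcases hM.1.le_iff.1 hle with h | h
  · exact absurd h hK.1.1
  · exact h.symm

lemma sum_le_prod_of_two_le (s : Finset ℕ) (hs : ∀ p ∈ s, 2 ≤ p) :
    ∑ p ∈ s, p ≤ ∏ p ∈ s, p := by
  induction s using Finset.induction_on with
  | empty => simp
  | insert a t ha ih =>
    rw [Finset.sum_insert ha, Finset.prod_insert ha]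
    have h2 : 2 ≤ a := hs a (Finset.mem_insert_self a t)
    have ih' := ih fun p hp => hs p (Finset.mem_insert_of_mem hp)
    rcases t.eq_empty_or_nonempty with rfl | ⟨q, hq⟩
    · simp
    · have hq2 : 2 ≤ ∑ p ∈ t, p :=
        (hs q (Finset.mem_insert_of_mem hq)).trans
          (Finset.single_le_sum (f := fun p => p) (fun _ _ => Nat.zero_le _) hq)
      nlinarith

lemma ncard_coatoms_not_ge_le {G : Type*} [Group G] [Finite G] (A : Subgroup G) [A.Normal]
    [IsCyclic A] (b : G) (hb : A ⊔ Subgroup.zpowers b = ⊤) :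
    {M : Subgroup G | IsCoatom M ∧ ¬ A ≤ M}.ncard ≤ Nat.card A := by
  let T : ℕ → Set (Subgroup G) := fun p =>
    {M | IsCoatom M ∧ ¬ A ≤ M ∧ (M.subgroupOf A).index = p}
  have hT : ∀ p, (T p).ncard ≤ p := by
    intro p
    rcases (T p).eq_empty_or_nonempty with h | ⟨M₀, -, -, h₀⟩
    · simp [h]
    · refine le_trans (Set.ncard_le_ncard ?_)
        ((ncard_coatoms_subgroupOf_eq_le A b hb (M₀.subgroupOf A)).trans_eq h₀)
      rintro M ⟨hM, hA, h⟩
      exact ⟨hM, hA, eq_of_index_eq_of_isCyclic (h.trans h₀.symm)⟩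
  have hsub : {M : Subgroup G | IsCoatom M ∧ ¬ A ≤ M} ⊆
      ⋃ p ∈ (Nat.card A).primeFactors, T p := by
    rintro M ⟨hM, hA⟩
    refine Set.mem_biUnion (x := (M.subgroupOf A).index) ?_ ⟨hM, hA, rfl⟩
    exact Nat.mem_primeFactors.2
      ⟨index_prime_of_isCoatom_of_isCyclic (isCoatom_subgroupOf A hM hA),
        Subgroup.index_dvd_card _, Nat.card_pos.ne'⟩
  calc _ ≤ (⋃ p ∈ (Nat.card A).primeFactors, T p).ncard := Set.ncard_le_ncard hsub
    _ ≤ ∑ p ∈ (Nat.card A).primeFactors, (T p).ncard := Finset.set_ncard_biUnion_le _ _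
    _ ≤ ∑ p ∈ (Nat.card A).primeFactors, p := Finset.sum_le_sum fun p _ => hT p
    _ ≤ ∏ p ∈ (Nat.card A).primeFactors, p :=
      sum_le_prod_of_two_le _ fun p hp => (Nat.prime_of_mem_primeFactors hp).two_le
    _ ≤ Nat.card A := Nat.le_of_dvd Nat.card_pos (Nat.prod_primeFactors_dvd _)

/-- **Lemma 2.5(i).** Let `m, n` be positive integers and let `G` be a finite group that is
an internal semidirect product of a normal cyclic subgroup `A` of order `m` by a cyclic
subgroup `B` of order `n` (i.e. `A ⊴ G`, `A ∩ B = 1` and `AB = G`). Then `G` has at most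
`m + ω(n)` maximal subgroups. -/
theorem card_maximal_subgroups_cyclic_by_cyclic_le
    {G : Type*} [Group G] [Finite G] (m n : ℕ) (hm : 0 < m) (hn : 0 < n)
    (A B : Subgroup G) (hAnorm : A.Normal)
    (hAcyc : IsCyclic ↥A) (hAcard : Nat.card ↥A = m)
    (hBcyc : IsCyclic ↥B) (hBcard : Nat.card ↥B = n)
    (hinf : A ⊓ B = ⊥) (hsup : A ⊔ B = ⊤) :
    {M : Subgroup G | IsCoatom M}.ncard ≤ m + n.primeFactors.card := by
  have hcompl : Subgroup.IsComplement' A B :=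
    Subgroup.isComplement'_of_disjoint_and_mul_eq_univ (disjoint_iff.2 hinf) (by
      rw [← Subgroup.normal_mul, hsup, Subgroup.coe_top])
  have hindex : A.index = n := by rw [hcompl.symm.index_eq_card, hBcard]
  have hquot : IsCyclic (G ⧸ A) := by
    refine isCyclic_of_surjective ((QuotientGroup.mk' A).comp B.subtype) fun q => ?_
    obtain ⟨g, rfl⟩ := QuotientGroup.mk'_surjective A q
    obtain ⟨y, hy, a, ha, rfl⟩ :=
      Subgroup.mem_sup_of_normal_right.1 ((sup_comm A B ▸ hsup) ▸ Subgroup.mem_top g)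
    refine ⟨⟨y, hy⟩, ?_⟩
    simpa [QuotientGroup.eq] using ha
  obtain ⟨b, rfl⟩ := (Subgroup.isCyclic_iff_exists_zpowers_eq_top B).1 hBcyc
  have hset : {M : Subgroup G | IsCoatom M} =
      {M | IsCoatom M ∧ ¬ A ≤ M} ∪ {M | IsCoatom M ∧ A ≤ M} := by
    ext M
    simp only [Set.mem_ofPred_eq, Set.mem_union]
    tauto
  rw [hset, ← hAcard, ← hindex]
  exact (Set.ncard_union_le _ _).trans
    (add_le_add (ncard_coatoms_not_ge_le A b hsup) (ncard_coatoms_ge_le A))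
end

section
/- Let m and n be positive integers and let G be a finite group that is an (internal) semidirect product of a normal cyclic subgroup A of order m by a subgroup K ≅ C_n × C_2, where K = BC for a cyclic subgroup B = ⟨b⟩ of order n and a subgroup C = ⟨c⟩ of order 2 with [b,c] = 1, B ∩ C trivial, A ∩ K trivial, AK = G, and where c a c⁻¹ = a⁻¹ for every a ∈ A. Then G has at most 2m + ω(n) + 2 maximal subgroups. -/
/-!
The maximal subgroups `M` are put on an explicit list, according to whether they contain `A`.
Write `A = ⟨a⟩`, `b a b⁻¹ = a ^ β`; every element of `G` has the form `a ^ i * b ^ j * c ^ k`.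

* If `A ≤ M` then `M` is normal, since `G ⧸ A` is abelian. When `c ∈ M`, the exponents `i` with
  `b ^ i ∈ M` are the multiples of a prime `q ∣ n`, and `M = A ⟨c⟩ ⟨b ^ q⟩`; this gives `ω(n)`
  possibilities. When `c ∉ M`, one of `b`, `b * c` lies in `M`, and `M` is `A ⟨b⟩` or `A ⟨b * c⟩`.
* If `A` is not contained in `M`, then `A M = G`, and the exponents `i` with `a ^ i ∈ M` are the
  multiples of a prime `p ∣ m`. As `A M = G`, some `a ^ i * c` and `a ^ j * b` lie in `M`, with
  `i`, `j` only relevant modulo `p`, and `M = ⟨a ^ p, a ^ i * c, a ^ j * b⟩`. The commutator of the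
  last two generators is `a ^ (i - 2 * j - β * i)`, so `p` divides `i - 2 * j - β * i`. For odd `p`
  this determines `j` from `i`, leaving at most `p` pairs `(i, j)`; for `p = 2` there are at most
  `4`. In both cases there are at most `2 * p`, and the sum of the primes dividing `m` is at
  most `m`.
-/

/-! ### Powers of an element outside a maximal subgroup -/

/-- If `M` is maximal, `x ∉ M`, and `M ⊔ ⟨x ^ q⟩` is always the product set `M ⟨x ^ q⟩`, then the
exponents `i` with `x ^ i ∈ M` are exactly the multiples of some prime. -/
lemma exists_prime_zpow_mem_iff {G : Type*} [Group G] [Finite G] {M : Subgroup G}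
    (hM : IsCoatom M) {x : G} (hx : x ∉ M)
    (hprod : ∀ q : ℕ, ∀ g ∈ M ⊔ Subgroup.zpowers (x ^ q), ∃ y ∈ M, ∃ i : ℤ, y * (x ^ q) ^ i = g) :
    ∃ p ∈ (orderOf x).primeFactors, ∀ i : ℤ, x ^ i ∈ M ↔ (p : ℤ) ∣ i := by
  classical
  have hex : ∃ k : ℕ, 0 < k ∧ x ^ k ∈ M :=
    ⟨orderOf x, orderOf_pos x, by rw [pow_orderOf_eq_one]; exact M.one_mem⟩
  obtain ⟨hk0, hkM⟩ := Nat.find_spec hex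
  have hmin : ∀ l : ℕ, l < Nat.find hex → ¬ (0 < l ∧ x ^ l ∈ M) := fun l hl => Nat.find_min hex hl
  generalize Nat.find hex = k at hk0 hkM hmin
  have hk1 : k ≠ 1 := by
    rintro rfl
    exact hx (by simpa using hkM)
  have hp : k.minFac.Prime := Nat.minFac_prime hk1
  obtain ⟨l, hl⟩ := k.minFac_dvd
  generalize k.minFac = p at hp hl
  have hl0 : 0 < l := by
    rcases Nat.eq_zero_or_pos l with rfl | h
    · simp at hl; omega
    · exact h
  have hlk : l < k := by
    have := hp.two_le
    rw [hl]; nlinarith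
  have hpM : x ^ p ∈ M := by
    by_contra hpM
    have htop : M ⊔ Subgroup.zpowers (x ^ p) = ⊤ := by
      apply hM.2
      refine lt_of_le_of_ne le_sup_left fun h => hpM ?_
      rw [h]
      exact Subgroup.mem_sup_right (Subgroup.mem_zpowers _)
    obtain ⟨y, hy, i, hyi⟩ := hprod p x (by rw [htop]; trivial)
    have h1 : x ^ (1 - (p : ℤ) * i) ∈ M := by
      have : x ^ (1 - (p : ℤ) * i) = y := by
        rw [zpow_sub, zpow_one, zpow_mul, zpow_natCast]
        exact mul_inv_eq_of_eq_mul hyi.symm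
      rwa [this]
    -- `l = l * (1 - p * i) + k * i`, so `x ^ l ∈ M`, against the minimality of `k`.
    apply hmin l hlk
    refine ⟨hl0, ?_⟩
    have h2 : x ^ l = (x ^ (1 - (p : ℤ) * i)) ^ (l : ℤ) * (x ^ k) ^ i := by
      rw [← zpow_natCast x k, ← zpow_natCast x l, ← zpow_mul, ← zpow_mul, ← zpow_add, hl]
      congr 1
      push_cast
      ring
    rw [h2]
    exact M.mul_mem (M.zpow_mem h1 _) (M.zpow_mem hkM _)
  have key : ∀ i : ℤ, x ^ i ∈ M ↔ (p : ℤ) ∣ i := by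
    intro i
    constructor
    · intro hi
      by_contra hnd
      have hco : IsCoprime (p : ℤ) i :=
        (Prime.coprime_iff_not_dvd (Nat.prime_iff_prime_int.mp hp)).2 hnd
      obtain ⟨u, v, huv⟩ := hco
      apply hx
      have : x = (x ^ p) ^ u * (x ^ i) ^ v := by
        rw [← zpow_natCast x p, ← zpow_mul, ← zpow_mul, ← zpow_add]
        rw [show (p : ℤ) * u + i * v = 1 by linarith, zpow_one]
      rw [this]
      exact M.mul_mem (M.zpow_mem hpM _) (M.zpow_mem hi _)
    · rintro ⟨t, rfl⟩
      rw [zpow_mul, zpow_natCast]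
      exact M.zpow_mem hpM _
  refine ⟨p, ?_, key⟩
  rw [Nat.mem_primeFactors]
  refine ⟨hp, ?_, (orderOf_pos x).ne'⟩
  have := (key (orderOf x)).1 (by rw [zpow_natCast, pow_orderOf_eq_one]; exact M.one_mem)
  exact_mod_cast this

lemma exists_zpow_mul_zpow_of_mem_sup {G : Type*} [Group G] {b c g : G} (hbc : Commute b c)
    (hg : g ∈ Subgroup.zpowers b ⊔ Subgroup.zpowers c) : ∃ j k : ℤ, g = b ^ j * c ^ k := by
  let P : Subgroup G :=
    { carrier := {g | ∃ j k : ℤ, g = b ^ j * c ^ k}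
      one_mem' := ⟨0, 0, by simp⟩
      mul_mem' := by
        rintro _ _ ⟨j, k, rfl⟩ ⟨j', k', rfl⟩
        refine ⟨j + j', k + k', ?_⟩
        rw [zpow_add, zpow_add, mul_assoc, ← mul_assoc (c ^ k), ((hbc.zpow_zpow j' k).eq).symm]
        group
      inv_mem' := by
        rintro _ ⟨j, k, rfl⟩
        refine ⟨-j, -k, ?_⟩
        rw [mul_inv_rev, zpow_neg, zpow_neg]
        exact ((hbc.zpow_zpow j k).inv_inv.eq).symm }
  have hle : Subgroup.zpowers b ⊔ Subgroup.zpowers c ≤ P := by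
    rw [sup_le_iff, Subgroup.zpowers_le, Subgroup.zpowers_le]
    exact ⟨⟨1, 0, by simp⟩, ⟨0, 1, by simp⟩⟩
  exact hle hg

/-- The residue pairs `(i, j)` modulo `p` allowed for a maximal subgroup containing `a ^ p`,
`a ^ i * c` and `a ^ j * b`, where `b a b⁻¹ = a ^ β`. Residues are represented in `[0, p)`. -/
noncomputable def admissiblePairs (β : ℤ) (p : ℕ) : Finset (ℤ × ℤ) :=
  (Finset.Ico (0 : ℤ) p ×ˢ Finset.Ico (0 : ℤ) p).filter
    fun x => (p : ℤ) ∣ x.1 - 2 * x.2 - β * x.1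

lemma card_admissiblePairs_le (β : ℤ) {p : ℕ} (hp : p.Prime) :
    (admissiblePairs β p).card ≤ 2 * p := by
  rcases hp.eq_two_or_odd' with rfl | hodd
  · refine (Finset.card_filter_le _ _).trans ?_
    simp
  · have : (admissiblePairs β p).card ≤ (Finset.Ico (0 : ℤ) p).card := by
      apply Finset.card_le_card_of_injOn Prod.fst
      · rintro ⟨i, j⟩ h
        simp only [admissiblePairs, Finset.coe_filter, Finset.mem_product, Set.mem_ofPred_eq] at h
        exact h.1.1
      · rintro ⟨i, j⟩ h ⟨i', j'⟩ h' (rfl : i = i')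
        simp only [admissiblePairs, Finset.coe_filter, Finset.mem_product, Set.mem_ofPred_eq,
          Finset.mem_Ico] at h h'
        have hd : (p : ℤ) ∣ 2 * (j - j') := by
          have := dvd_sub h'.2 h.2
          rwa [show i - 2 * j' - β * i - (i - 2 * j - β * i) = 2 * (j - j') by ring] at this
        have hd' : (p : ℤ) ∣ j - j' := by
          rcases (Nat.prime_iff_prime_int.mp hp).dvd_or_dvd hd with h2 | h2
          · exfalso
            have h3 : p ∣ 2 := by exact_mod_cast h2
            have := (Nat.prime_dvd_prime_iff_eq hp Nat.prime_two).1 h3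
            subst this
            exact absurd hodd (by decide)
          · exact h2
        have := Int.eq_zero_of_abs_lt_dvd hd' (by rw [abs_lt]; omega)
        rw [Prod.mk.injEq]
        exact ⟨rfl, by omega⟩
    rw [Int.card_Ico] at this
    simp at this
    omega

/-! ### The list of maximal subgroups -/

/-- **Lemma 2.5(ii).** Let `m, n` be positive integers and let `G` be a finite group that is
an internal semidirect product of a normal cyclic subgroup `A` of order `m` by a subgroup
`K ≅ C_n × C_2`, where `K = ⟨b⟩⟨c⟩` for commuting elements `b` of order `n` and `c` of
order `2` generating subgroups with trivial intersection, `A ∩ K = 1`, `AK = G`, and where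
`c` inverts every element of `A`. Then `G` has at most `2m + ω(n) + 2` maximal subgroups. -/
theorem card_maximal_subgroups_dihedral_type_le
    {G : Type*} [Group G] [Finite G] (m n : ℕ) (hm : 0 < m) (hn : 0 < n)
    (A : Subgroup G) (hAnorm : A.Normal)
    (hAcyc : IsCyclic ↥A) (hAcard : Nat.card ↥A = m)
    (b c : G) (hb : orderOf b = n) (hc : orderOf c = 2) (hbc : Commute b c)
    (hBC : Subgroup.zpowers b ⊓ Subgroup.zpowers c = ⊥)
    (hAK : A ⊓ (Subgroup.zpowers b ⊔ Subgroup.zpowers c) = ⊥)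
    (hGen : A ⊔ (Subgroup.zpowers b ⊔ Subgroup.zpowers c) = ⊤)
    (hinv : ∀ a ∈ A, c * a * c⁻¹ = a⁻¹) :
    {M : Subgroup G | IsCoatom M}.ncard ≤ 2 * m + n.primeFactors.card + 2 := by
  classical
  obtain ⟨a, haA, hAgen⟩ : ∃ a ∈ A, ∀ x ∈ A, ∃ i : ℤ, a ^ i = x := by
    obtain ⟨⟨a, ha⟩, h⟩ := hAcyc.exists_generator
    refine ⟨a, ha, fun x hx => ?_⟩
    obtain ⟨i, hi⟩ := Subgroup.mem_zpowers_iff.1 (h ⟨x, hx⟩)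
    exact ⟨i, by simpa using congrArg Subtype.val hi⟩
  have hAz : A = Subgroup.zpowers a := by
    apply le_antisymm
    · intro x hx
      obtain ⟨i, hi⟩ := hAgen x hx
      exact ⟨i, hi⟩
    · rwa [Subgroup.zpowers_le]
  have hord : orderOf a = m := by
    rw [← hAcard, hAz, Nat.card_zpowers]
  obtain ⟨β, hβ⟩ := hAgen (b * a * b⁻¹) (hAnorm.conj_mem a haA b)
  have hdecomp : ∀ g : G, ∃ x ∈ A, ∃ j k : ℤ, g = x * (b ^ j * c ^ k) := by
    intro g
    obtain ⟨x, hx, y, hy, rfl⟩ := Subgroup.mem_sup_of_normal_left.1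
      (show g ∈ A ⊔ (Subgroup.zpowers b ⊔ Subgroup.zpowers c) by rw [hGen]; trivial)
    obtain ⟨j, k, rfl⟩ := exists_zpow_mul_zpow_of_mem_sup hbc hy
    exact ⟨x, hx, j, k, rfl⟩
  have hnormal : ∀ M : Subgroup G, A ≤ M → M.Normal := by
    intro M hAM
    constructor
    intro u hu g
    have hcomm : g * u * g⁻¹ * u⁻¹ ∈ A := by
      obtain ⟨x, hx, j, k, rfl⟩ := hdecomp g
      obtain ⟨y, hy, j', k', rfl⟩ := hdecomp u
      rw [← QuotientGroup.eq_one_iff]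
      have hx1 : (x : G ⧸ A) = 1 := (QuotientGroup.eq_one_iff x).2 hx
      have hy1 : (y : G ⧸ A) = 1 := (QuotientGroup.eq_one_iff y).2 hy
      have hcom : Commute (b ^ j * c ^ k) (b ^ j' * c ^ k') :=
        (((Commute.refl b).zpow_zpow j j').mul_right (hbc.zpow_zpow j k')).mul_left
          ((hbc.symm.zpow_zpow k j').mul_right ((Commute.refl c).zpow_zpow k k'))
      have hcom' := congrArg (fun g : G => (g : G ⧸ A)) hcom.eq
      simp only [QuotientGroup.mk_mul, QuotientGroup.mk_inv, hx1, hy1, one_mul] at hcom' ⊢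
      rw [hcom']
      group
    have := M.mul_mem (hAM hcomm) hu
    simpa using this
  have hcsq : ∀ k : ℤ, c ^ k = 1 ∨ c ^ k = c := by
    intro k
    have hc2 : c ^ (2 : ℤ) = 1 := by
      have := pow_orderOf_eq_one c
      rw [hc] at this
      exact_mod_cast this
    rcases Int.even_or_odd' k with ⟨t, rfl | rfl⟩
    · left; rw [zpow_mul, hc2, one_zpow]
    · right; rw [zpow_add, zpow_mul, hc2, one_zpow, one_mul, zpow_one]
  let N : ℕ → Subgroup G := fun q => A ⊔ Subgroup.zpowers c ⊔ Subgroup.zpowers (b ^ q)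
  let L : ℕ → ℤ × ℤ → Subgroup G := fun p x =>
    Subgroup.closure {a ^ p, a ^ x.1 * c, a ^ x.2 * b}
  let T : Finset (Subgroup G) :=
    (m.primeFactors.biUnion fun p => (admissiblePairs β p).image (L p)) ∪
      n.primeFactors.image N ∪ {A ⊔ Subgroup.zpowers b, A ⊔ Subgroup.zpowers (b * c)}
  have hcover : {M : Subgroup G | IsCoatom M} ⊆ (T : Set (Subgroup G)) := by
    intro M hM
    replace hM : IsCoatom M := hM
    simp only [T, Finset.coe_union, Set.mem_union, Finset.mem_coe]
    by_cases hAM : A ≤ M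
    · have hMn : M.Normal := hnormal M hAM
      by_cases hcM : c ∈ M
      · left; right
        have hbM : b ∉ M := by
          intro hbM
          apply hM.1
          rw [eq_top_iff, ← hGen]
          simp only [sup_le_iff, Subgroup.zpowers_le]
          exact ⟨hAM, hbM, hcM⟩
        obtain ⟨q, hq, hqM⟩ := exists_prime_zpow_mem_iff hM hbM (by
          intro q g hg
          obtain ⟨y, hy, z, hz, rfl⟩ := Subgroup.mem_sup_of_normal_left.1 hg
          obtain ⟨i, rfl⟩ := hz
          exact ⟨y, hy, i, rfl⟩)
        rw [hb] at hq
        refine Finset.mem_image.2 ⟨q, hq, ?_⟩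
        apply le_antisymm
        · simp only [N, sup_le_iff, Subgroup.zpowers_le]
          refine ⟨⟨hAM, hcM⟩, ?_⟩
          have := (hqM q).2 dvd_rfl
          rwa [zpow_natCast] at this
        · intro g hg
          obtain ⟨x, hx, j, k, rfl⟩ := hdecomp g
          have h1 : b ^ j ∈ M := by
            rwa [M.mul_mem_cancel_left (hAM hx), M.mul_mem_cancel_right (M.zpow_mem hcM k)] at hg
          obtain ⟨t, rfl⟩ := (hqM j).1 h1
          rw [zpow_mul, zpow_natCast]
          refine mul_mem (Subgroup.mem_sup_left (Subgroup.mem_sup_left hx)) (mul_mem ?_ ?_)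
          · exact Subgroup.mem_sup_right ⟨t, rfl⟩
          · exact Subgroup.mem_sup_left (Subgroup.mem_sup_right ⟨k, rfl⟩)
      · right
        -- Every element is in `A ⟨d⟩` or `A ⟨d⟩ c`, with `d = b * c ^ e`; as `c ∉ M`, only `A ⟨d⟩` fits.
        have hd : ∀ e : ℤ, b * c ^ e ∈ M → M = A ⊔ Subgroup.zpowers (b * c ^ e) := by
          intro e he
          apply le_antisymm
          · intro g hg
            obtain ⟨x, hx, j, k, rfl⟩ := hdecomp g
            have h1 : b ^ j * c ^ k = (b * c ^ e) ^ j * c ^ (k - e * j) := by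
              rw [(hbc.zpow_right e).mul_zpow, mul_assoc, ← zpow_mul, ← zpow_add]
              congr 2
              ring
            have h2 : c ^ (k - e * j) ∈ M := by
              rwa [M.mul_mem_cancel_left (hAM hx), h1,
                M.mul_mem_cancel_left (M.zpow_mem he j)] at hg
            have h3 : c ^ (k - e * j) = 1 := by
              rcases hcsq (k - e * j) with h | h
              · exact h
              · exact absurd (h ▸ h2) hcM
            rw [h1, h3, mul_one]
            exact mul_mem (Subgroup.mem_sup_left hx) (Subgroup.mem_sup_right ⟨j, rfl⟩)
          · simp only [sup_le_iff, Subgroup.zpowers_le]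
            exact ⟨hAM, he⟩
        have htop : M ⊔ Subgroup.zpowers c = ⊤ := by
          apply hM.2
          refine lt_of_le_of_ne le_sup_left fun h => hcM ?_
          rw [h]
          exact Subgroup.mem_sup_right (Subgroup.mem_zpowers _)
        obtain ⟨y, hy, z, ⟨k, rfl⟩, hyz⟩ := Subgroup.mem_sup_of_normal_left.1
          (show b ∈ M ⊔ Subgroup.zpowers c by rw [htop]; trivial)
        have he : b * c ^ (-k) ∈ M := by
          have : b * c ^ (-k) = y := by rw [← hyz]; simp
          rwa [this]
        rw [hd _ he]
        rcases hcsq (-k) with h | h <;> simp [h]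
    · left; left
      have haM : a ∉ M := by
        intro h
        apply hAM
        rwa [hAz, Subgroup.zpowers_le]
      have htop : A ⊔ M = ⊤ := by
        apply hM.2
        refine lt_of_le_of_ne le_sup_right fun h => hAM ?_
        rw [h]
        exact le_sup_left
      obtain ⟨p, hp, hpM⟩ := exists_prime_zpow_mem_iff hM haM (by
        intro q g hg
        have hqn : (Subgroup.zpowers (a ^ q)).Normal := by
          constructor
          rintro _ ⟨i, rfl⟩ g
          obtain ⟨t, ht⟩ := hAgen (g * a * g⁻¹) (hAnorm.conj_mem a haA g)
          refine ⟨t * i, ?_⟩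
          simp only
          rw [← conj_zpow, ← conj_pow, ← ht]
          simp only [← zpow_natCast, ← zpow_mul]
          congr 1
          ring
        obtain ⟨y, hy, z, hz, rfl⟩ := Subgroup.mem_sup_of_normal_right.1 hg
        obtain ⟨i, rfl⟩ := hz
        exact ⟨y, hy, i, rfl⟩)
      rw [hord] at hp
      have hpp : p.Prime := Nat.prime_of_mem_primeFactors hp
      have hp0 : (p : ℤ) ≠ 0 := by exact_mod_cast hpp.ne_zero
      have hlift : ∀ g : G, ∃ i ∈ Finset.Ico (0 : ℤ) p, a ^ i * g ∈ M := by
        intro g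
        obtain ⟨x, hx, z, hz, rfl⟩ := Subgroup.mem_sup_of_normal_left.1
          (show g ∈ A ⊔ M by rw [htop]; trivial)
        obtain ⟨t, rfl⟩ := hAgen x hx
        refine ⟨(-t) % p, ?_, ?_⟩
        · rw [Finset.mem_Ico]
          exact ⟨Int.emod_nonneg _ hp0, Int.emod_lt_of_pos _ (by exact_mod_cast hpp.pos)⟩
        · rw [← mul_assoc, ← zpow_add]
          refine M.mul_mem ((hpM _).2 ?_) hz
          have := Int.dvd_self_sub_emod (x := -t) (m := (p : ℤ))
          have h := (dvd_neg.2 this)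
          rwa [show -(-t - -t % (p : ℤ)) = -t % (p : ℤ) + t by ring] at h
      obtain ⟨i, hi, hiM⟩ := hlift c
      obtain ⟨j, hj, hjM⟩ := hlift b
      have hca : ∀ t : ℤ, c * a ^ t = a ^ (-t) * c := by
        intro t
        have := hinv (a ^ t) (A.zpow_mem haA t)
        rw [zpow_neg, ← this]
        group
      have hba : ∀ t : ℤ, b * a ^ t = a ^ (β * t) * b := by
        intro t
        rw [zpow_mul, hβ, conj_zpow]
        group
      have hrel : (p : ℤ) ∣ i - 2 * j - β * i := by
        rw [← hpM]
        have h1 : a ^ i * c * (a ^ j * b) = a ^ (i - j) * (b * c) := by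
          rw [mul_assoc, ← mul_assoc c, hca, hbc.eq, sub_eq_add_neg, zpow_add]
          simp only [mul_assoc]
        have h2 : a ^ j * b * (a ^ i * c) = a ^ (j + β * i) * (b * c) := by
          rw [mul_assoc, ← mul_assoc b, hba, zpow_add]
          simp only [mul_assoc]
        have h3 : a ^ (i - 2 * j - β * i) =
            a ^ i * c * (a ^ j * b) * (a ^ j * b * (a ^ i * c))⁻¹ := by
          rw [h1, h2, mul_inv_rev, mul_assoc, mul_inv_cancel_left, ← zpow_neg, ← zpow_add]
          congr 1
          ring
        rw [h3]
        exact M.mul_mem (M.mul_mem hiM hjM) (M.inv_mem (M.mul_mem hjM hiM))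
      refine Finset.mem_biUnion.2 ⟨p, hp, Finset.mem_image.2 ⟨(i, j), ?_, ?_⟩⟩
      · simp only [admissiblePairs, Finset.mem_filter, Finset.mem_product]
        exact ⟨⟨hi, hj⟩, hrel⟩
      · have hpL : a ^ p ∈ L p (i, j) := Subgroup.subset_closure (by simp)
        have hiL : a ^ i * c ∈ L p (i, j) := Subgroup.subset_closure (by simp)
        have hjL : a ^ j * b ∈ L p (i, j) := Subgroup.subset_closure (by simp)
        have hLM : L p (i, j) ≤ M := by
          simp only [L]
          rw [Subgroup.closure_le]
          rintro g (rfl | rfl | rfl)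
          · have := (hpM p).2 dvd_rfl
            rwa [zpow_natCast] at this
          · exact hiM
          · exact hjM
        have hAL : A ⊔ L p (i, j) = ⊤ := by
          rw [eq_top_iff, ← hGen]
          simp only [sup_le_iff, Subgroup.zpowers_le]
          refine ⟨le_sup_left, ?_, ?_⟩
          · exact ((A ⊔ L p (i, j)).mul_mem_cancel_left
              (Subgroup.mem_sup_left (A.zpow_mem haA j))).1 (Subgroup.mem_sup_right hjL)
          · exact ((A ⊔ L p (i, j)).mul_mem_cancel_left
              (Subgroup.mem_sup_left (A.zpow_mem haA i))).1 (Subgroup.mem_sup_right hiL)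
        refine le_antisymm hLM fun g hg => ?_
        -- `G = A L`, so it is enough that `A ∩ M = ⟨a ^ p⟩` lies in `L`.
        obtain ⟨x, hx, z, hz, rfl⟩ := Subgroup.mem_sup_of_normal_left.1
          (show g ∈ A ⊔ L p (i, j) by rw [hAL]; trivial)
        obtain ⟨t, rfl⟩ := hAgen x hx
        rw [M.mul_mem_cancel_right (hLM hz), hpM] at hg
        obtain ⟨s, rfl⟩ := hg
        rw [zpow_mul, zpow_natCast]
        exact mul_mem (zpow_mem hpL s) hz
  have hT : T.card ≤ 2 * m + n.primeFactors.card + 2 := by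
    have h1 : (m.primeFactors.biUnion fun p => (admissiblePairs β p).image (L p)).card
        ≤ 2 * m := by
      calc _ ≤ ∑ p ∈ m.primeFactors, ((admissiblePairs β p).image (L p)).card :=
            Finset.card_biUnion_le
        _ ≤ ∑ p ∈ m.primeFactors, 2 * p := Finset.sum_le_sum fun p hp =>
            Finset.card_image_le.trans
              (card_admissiblePairs_le β (Nat.prime_of_mem_primeFactors hp))
        _ = 2 * ∑ p ∈ m.primeFactors, p := by rw [Finset.mul_sum]
        _ ≤ 2 * ∏ p ∈ m.primeFactors, p := Nat.mul_le_mul_left _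
            (sum_le_prod_of_two_le _ fun p hp => (Nat.prime_of_mem_primeFactors hp).two_le)
        _ ≤ 2 * m := Nat.mul_le_mul_left _ (Nat.le_of_dvd hm (Nat.prod_primeFactors_dvd m))
    refine (Finset.card_union_le _ _).trans (add_le_add ((Finset.card_union_le _ _).trans
      (add_le_add h1 Finset.card_image_le)) Finset.card_le_two)
  calc _ ≤ (T : Set (Subgroup G)).ncard := Set.ncard_le_ncard hcover T.finite_toSet
    _ = T.card := Set.ncard_coe_finset T
    _ ≤ _ := hT
end
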